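/- Let 1<p<∞ and let Ω ⊆ ℝ^N be an open set. Suppose there exists k ∈ ℕ\{0} such that λ_{k,p}^{LS}(Ω) < E_p(Ω). Then for every ℓ ∈ {1,…,k} the minmax value λ_{ℓ,p}^{LS}(Ω) is an eigenvalue of the Dirichlet p-Laplacian on Ω, i.e. there exists u ∈ W^{1,p}_0(Ω)\{0} such that ∫_Ω ⟨|∇u|^{p−2}∇u, ∇φ⟩ dx = λ_{ℓ,p}^{LS}(Ω) ∫_Ω |u|^{p−2} u φ dx for every φ ∈ C_c^∞(Ω). -/

import Mathlib

open MeasureTheory Filter Topology Metric Set ENNReal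
open scoped RealInnerProductSpace

noncomputable section

/-- Euclidean space `ℝ^N`. -/
abbrev EucN (N : ℕ) := EuclideanSpace ℝ (Fin N)

/-- A test function on an open set `Ω ⊆ ℝ^N`: smooth, with compact support contained in `Ω`. -/
def IsTestFun {N : ℕ} (Ω : Set (EucN N)) (φ : EucN N → ℝ) : Prop :=
  ContDiff ℝ (⊤ : ℕ∞) φ ∧ HasCompactSupport φ ∧ tsupport φ ⊆ Ω

/-- Pairs `(u, g)` in `L^q × L^q`, thought of as a function together with its (weak) gradient. -/
abbrev SobPair (N : ℕ) (q : ℝ≥0∞) :=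
  Lp ℝ q (volume : Measure (EucN N)) × Lp (EucN N) q (volume : Measure (EucN N))

/-- A pair given (a.e.) by a test function and its gradient. -/
def IsTestPair {N : ℕ} (q : ℝ≥0∞) (Ω : Set (EucN N)) (w : SobPair N q) : Prop :=
  ∃ ψ : EucN N → ℝ, IsTestFun Ω ψ ∧ (⇑w.1 =ᵐ[volume] ψ) ∧
    (⇑w.2 =ᵐ[volume] fun x => gradient ψ x)

theorem fact_one_le_ofReal {p : ℝ} (hp : 1 ≤ p) : Fact (1 ≤ ENNReal.ofReal p) :=
  ⟨ENNReal.one_le_ofReal.mpr hp⟩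

/-- The Sobolev space `W^{1,p}_0(Ω)`, realized as the closure in `L^p × L^p` of the set of
pairs (test function, its gradient). -/
def W10 (N : ℕ) (p : ℝ) (hp : 1 ≤ p) (Ω : Set (EucN N)) :
    Set (SobPair N (ENNReal.ofReal p)) :=
  letI := fact_one_le_ofReal hp
  closure {w | IsTestPair (ENNReal.ofReal p) Ω w}

/-- The first eigenvalue `λ_{1,p}(Ω)` (as an extended real, `∞` if there are no admissible
functions). -/
def lambda1p (N : ℕ) (p : ℝ) (hp : 1 ≤ p) (Ω : Set (EucN N)) : ℝ≥0∞ :=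
  sInf {t | ∃ w ∈ W10 N p hp Ω, (∫ x, |w.1 x| ^ p) = 1 ∧
    t = ENNReal.ofReal (∫ x, ‖w.2 x‖ ^ p)}

/-- The `L^p` Poincaré constant "at infinity" `E_p(Ω)`. -/
def Einfty (N : ℕ) (p : ℝ) (hp : 1 ≤ p) (Ω : Set (EucN N)) : ℝ≥0∞ :=
  ⨆ R ∈ Set.Ioi (0 : ℝ), lambda1p N p hp (Ω \ closure (ball (0 : EucN N) R))

/-- There is a continuous odd map from `A` to the unit sphere `S^{j-1} ⊆ ℝ^j`. -/
def HasOddMapToSphere {Z : Type*} [NormedAddCommGroup Z] (A : Set Z) (j : ℕ) : Prop :=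
  ∃ f : Z → EuclideanSpace ℝ (Fin j),
    ContinuousOn f A ∧ (∀ x ∈ A, ‖f x‖ = 1) ∧ ∀ x ∈ A, f (-x) = -f x

/-- The Krasnosel'skii genus of `A` is at least `k`. -/
def genusGE {Z : Type*} [NormedAddCommGroup Z] (A : Set Z) (k : ℕ) : Prop :=
  ∀ j : ℕ, HasOddMapToSphere A j → k ≤ j

/-- The Krasnosel'skii genus of `A`, valued in `ℕ∞`. -/
def genus {Z : Type*} [NormedAddCommGroup Z] (A : Set Z) : ℕ∞ :=
  sInf {k : ℕ∞ | ∃ j : ℕ, (j : ℕ∞) = k ∧ HasOddMapToSphere A j}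

/-- The class `𝒲_{k,p}(Ω)` of compact symmetric subsets of `S_p(Ω) ∩ W^{1,p}_0(Ω)` with
genus at least `k`. -/
def SobClass (N : ℕ) (p : ℝ) (hp : 1 ≤ p) (Ω : Set (EucN N)) (k : ℕ) :
    Set (Set (SobPair N (ENNReal.ofReal p))) :=
  letI := fact_one_le_ofReal hp
  {K | K ⊆ W10 N p hp Ω ∧ (∀ w ∈ K, (∫ x, |w.1 x| ^ p) = 1) ∧
       (∀ w ∈ K, -w ∈ K) ∧ IsCompact K ∧ genusGE K k}

/-- The `k`-th minmax Ljusternik–Schnirelmann value `λ_{k,p}^{LS}(Ω)`. -/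
def lambdaLS (N : ℕ) (p : ℝ) (hp : 1 ≤ p) (Ω : Set (EucN N)) (k : ℕ) : ℝ≥0∞ :=
  ⨅ K ∈ SobClass N p hp Ω k, ⨆ w ∈ K, ENNReal.ofReal (∫ x, ‖w.2 x‖ ^ p)

/-- `w = (u, ∇u)` is an eigenfunction of the Dirichlet `p`-Laplacian on `Ω` associated to the
eigenvalue `lam`. -/
def IsEigenfunction (N : ℕ) (p : ℝ) (hp : 1 ≤ p) (Ω : Set (EucN N)) (lam : ℝ)
    (w : SobPair N (ENNReal.ofReal p)) : Prop :=
  w ∈ W10 N p hp Ω ∧ w ≠ 0 ∧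
  ∀ φ : EucN N → ℝ, IsTestFun Ω φ →
    (∫ x, ‖w.2 x‖ ^ (p - 2) * ⟪w.2 x, gradient φ x⟫) =
      lam * ∫ x, |w.1 x| ^ (p - 2) * (w.1 x) * φ x

/-- `lam` is an eigenvalue of the Dirichlet `p`-Laplacian on `Ω`. -/
def IsEigenvalue (N : ℕ) (p : ℝ) (hp : 1 ≤ p) (Ω : Set (EucN N)) (lam : ℝ) : Prop :=
  ∃ w, IsEigenfunction N p hp Ω lam w

/-- `v = (v, ∇v)` is a non-negative weak subsolution of `-Δ_p u = lam · u^{p-1}` in `Ω`. -/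
def IsSubsolution (N : ℕ) (p : ℝ) (hp : 1 ≤ p) (Ω : Set (EucN N)) (lam : ℝ)
    (v : SobPair N (ENNReal.ofReal p)) : Prop :=
  v ∈ W10 N p hp Ω ∧ (∀ᵐ x, 0 ≤ v.1 x) ∧
  ∀ φ ∈ W10 N p hp Ω, (∀ᵐ x, 0 ≤ φ.1 x) →
    (∫ x, ‖v.2 x‖ ^ (p - 2) * ⟪v.2 x, φ.2 x⟫) ≤ lam * ∫ x, (v.1 x) ^ (p - 1) * φ.1 x

/-- A strongly confining potential. -/
def StronglyConfining (N : ℕ) (V : EucN N → ℝ) : Prop :=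
  LocallyIntegrable V volume ∧ (∀ᵐ x, 0 ≤ V x) ∧
  ∃ α : ℝ → ℝ, (∀ R > (0 : ℝ), 0 < α R) ∧ MonotoneOn α (Set.Ioi 0) ∧
    Tendsto α atTop atTop ∧
    ∀ R > (0 : ℝ), ∀ᵐ x, x ∉ ball (0 : EucN N) R → α R ≤ V x

/-- Triples `(u, g, h)` in `L^q × L^q × L^q`; `h` plays the role of `V^{1/p} u` in the weighted
Sobolev space. -/
abbrev SobTriple (N : ℕ) (q : ℝ≥0∞) :=
  Lp ℝ q (volume : Measure (EucN N)) × Lp (EucN N) q (volume : Measure (EucN N)) ×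
    Lp ℝ q (volume : Measure (EucN N))

/-- A triple given (a.e.) by a test function, its gradient, and `V^{1/p}` times it. -/
def IsTestTriple {N : ℕ} (q : ℝ≥0∞) (p : ℝ) (Ω : Set (EucN N)) (V : EucN N → ℝ)
    (w : SobTriple N q) : Prop :=
  ∃ ψ : EucN N → ℝ, IsTestFun Ω ψ ∧ (⇑w.1 =ᵐ[volume] ψ) ∧
    (⇑w.2.1 =ᵐ[volume] fun x => gradient ψ x) ∧
    (⇑w.2.2 =ᵐ[volume] fun x => (V x) ^ (1/p) * ψ x)

/-- The weighted Sobolev space `W^{1,p}_0(Ω; V)`, realized as a closure of triples coming from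
test functions; the norm topology of `L^p × L^p × L^p` on such triples corresponds exactly to
the weighted Sobolev norm `(∫|∇u|^p + ∫(1+V)|u|^p)^{1/p}`. -/
def W10V (N : ℕ) (p : ℝ) (hp : 1 ≤ p) (Ω : Set (EucN N)) (V : EucN N → ℝ) :
    Set (SobTriple N (ENNReal.ofReal p)) :=
  letI := fact_one_le_ofReal hp
  closure {w | IsTestTriple (ENNReal.ofReal p) p Ω V w}

/-- The class `𝒲_{k,p}(Ω; V)` for the weighted space. -/
def SobClassV (N : ℕ) (p : ℝ) (hp : 1 ≤ p) (Ω : Set (EucN N)) (V : EucN N → ℝ) (k : ℕ) :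
    Set (Set (SobTriple N (ENNReal.ofReal p))) :=
  letI := fact_one_le_ofReal hp
  {K | K ⊆ W10V N p hp Ω V ∧ (∀ w ∈ K, (∫ x, |w.1 x| ^ p) = 1) ∧
       (∀ w ∈ K, -w ∈ K) ∧ IsCompact K ∧ genusGE K k}

/-- The perturbed minmax value `λ_{k,p}^{LS}(Ω; ε V)`, for the functional
`G(φ) = ∫|∇φ|^p + ε ∫ V |φ|^p`. -/
def lambdaLSV (N : ℕ) (p : ℝ) (hp : 1 ≤ p) (Ω : Set (EucN N)) (V : EucN N → ℝ)
    (ε : ℝ) (k : ℕ) : ℝ≥0∞ :=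
  ⨅ K ∈ SobClassV N p hp Ω V k, ⨆ w ∈ K,
    ENNReal.ofReal ((∫ x, ‖w.2.1 x‖ ^ p) + ε * ∫ x, |w.2.2 x| ^ p)

/-- `w` is a constrained critical point, at level `lam`, of the perturbed functional
`G(φ) = ∫|∇φ|^p + ε ∫ V |φ|^p` on the unit sphere of `L^p`. -/
def IsCriticalV (N : ℕ) (p : ℝ) (hp : 1 ≤ p) (Ω : Set (EucN N)) (V : EucN N → ℝ)
    (ε : ℝ) (lam : ℝ) (w : SobTriple N (ENNReal.ofReal p)) : Prop :=
  w ∈ W10V N p hp Ω V ∧ (∫ x, |w.1 x| ^ p) = 1 ∧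
  ∀ φ : EucN N → ℝ, IsTestFun Ω φ →
    (∫ x, ‖w.2.1 x‖ ^ (p - 2) * ⟪w.2.1 x, gradient φ x⟫)
      + ε * ∫ x, V x * |w.1 x| ^ (p - 2) * (w.1 x) * φ x
    = lam * ∫ x, |w.1 x| ^ (p - 2) * (w.1 x) * φ x

/-- The embedding `W^{1,p}_0(Ω) ↪ L^p(Ω)` is compact: every bounded sequence in `W^{1,p}_0(Ω)`
has a subsequence converging strongly in `L^p`. -/
def CompactSobolevEmbedding (N : ℕ) (p : ℝ) (hp : 1 ≤ p) (Ω : Set (EucN N)) : Prop :=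
  ∀ w : ℕ → SobPair N (ENNReal.ofReal p), (∀ n, w n ∈ W10 N p hp Ω) →
    (∃ M : ℝ≥0∞, M ≠ ⊤ ∧ ∀ n, eLpNorm (⇑(w n).1) (ENNReal.ofReal p) volume ≤ M ∧
        eLpNorm (⇑(w n).2) (ENNReal.ofReal p) volume ≤ M) →
    ∃ σ : ℕ → ℕ, StrictMono σ ∧ ∃ u : EucN N → ℝ, MemLp u (ENNReal.ofReal p) volume ∧
      Tendsto (fun n => eLpNorm (⇑(w (σ n)).1 - u) (ENNReal.ofReal p) volume) atTop (𝓝 0)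


/-- Compactness template for homogeneous functions. -/
theorem aux_template {V : Type*} [NormedAddCommGroup V] [NormedSpace ℝ V] [FiniteDimensional ℝ V]
    {p : ℝ} (hp : 0 < p) (F G n : V → ℝ) (hF : Continuous F) (hG : Continuous G)
    (hn : Continuous n)
    (hFh : ∀ t : ℝ, 0 < t → ∀ x, F (t • x) = t ^ p * F x)
    (hGh : ∀ t : ℝ, 0 < t → ∀ x, G (t • x) = t ^ p * G x)
    (hnh : ∀ t : ℝ, 0 < t → ∀ x, n (t • x) = t ^ p * n x)
    (hG0 : ∀ x, 0 ≤ G x) (hn0 : ∀ x, x ≠ 0 → 0 < n x)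
    (hFG : ∀ x, G x = 0 → F x ≤ 0) {ε : ℝ} (hε : 0 < ε) :
    ∃ C : ℝ, 0 ≤ C ∧ ∀ x, F x ≤ ε * n x + C * G x := by
  have h2 : (2 : ℝ) ^ p > 1 := Real.one_lt_rpow (by norm_num) hp
  have hz : ∀ f : V → ℝ, (∀ t : ℝ, 0 < t → ∀ x, f (t • x) = t ^ p * f x) → f 0 = 0 := by
    intro f hf
    have := hf 2 (by norm_num) 0
    rw [smul_zero] at this
    nlinarith
  obtain ⟨C, hC0, hC⟩ : ∃ C : ℝ, 0 ≤ C ∧ ∀ x ∈ sphere (0 : V) 1, F x ≤ ε * n x + C * G x := by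
    have hS : IsCompact (sphere (0 : V) 1) := isCompact_sphere 0 1
    obtain ⟨B, hB⟩ := hS.bddAbove_image hF.continuousOn
    have hK : IsCompact (sphere (0 : V) 1 ∩ {x | ε * n x ≤ F x}) :=
      hS.inter_right (isClosed_le (by fun_prop) hF)
    rcases (sphere (0 : V) 1 ∩ {x | ε * n x ≤ F x}).eq_empty_or_nonempty with he | hne
    · refine ⟨0, le_rfl, fun x hx => ?_⟩
      by_contra h
      have : x ∈ (sphere (0 : V) 1 ∩ {x | ε * n x ≤ F x}) := ⟨hx, by
        simp only [mem_setOf_eq]; linarith⟩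
      rw [he] at this; exact this
    · obtain ⟨x0, hx0, hmin⟩ := hK.exists_isMinOn hne hG.continuousOn
      have hx0' : x0 ≠ 0 := by
        rintro rfl; simpa using hx0.1
      have hm : 0 < G x0 := by
        refine lt_of_le_of_ne (hG0 _) (fun h => ?_)
        have h1 := hFG x0 h.symm
        have h3 := hn0 x0 hx0'
        have h4 : ε * n x0 ≤ F x0 := hx0.2
        nlinarith [mul_pos hε h3]
      refine ⟨|B| / G x0, by positivity, fun x hx => ?_⟩
      have hx' : x ≠ 0 := by
        rintro rfl; simp at hx
      have h3 := mul_pos hε (hn0 x hx')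
      by_cases h : ε * n x ≤ F x
      · have h5 : G x0 ≤ G x := hmin ⟨hx, h⟩
        have h6 : F x ≤ |B| := (hB (mem_image_of_mem _ hx)).trans (le_abs_self _)
        have : |B| ≤ |B| / G x0 * G x := by
          rw [div_mul_eq_mul_div, le_div_iff₀ hm]
          exact mul_le_mul_of_nonneg_left h5 (abs_nonneg _)
        linarith
      · have : 0 ≤ |B| / G x0 * G x := mul_nonneg (by positivity) (hG0 _)
        linarith
  refine ⟨C, hC0, fun x => ?_⟩
  by_cases hx : x = 0
  · subst hx; simp [hz F hFh, hz G hGh, hz n hnh]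
  · have hpos : 0 < ‖x‖ := norm_pos_iff.2 hx
    have key := hC (‖x‖⁻¹ • x) (by simp [norm_smul, hpos.ne'])
    have hxx : x = ‖x‖ • (‖x‖⁻¹ • x) := by rw [smul_smul, mul_inv_cancel₀ hpos.ne', one_smul]
    rw [hxx, hFh _ hpos, hGh _ hpos, hnh _ hpos]
    have : 0 < ‖x‖ ^ p := Real.rpow_pos_of_pos hpos p
    nlinarith [mul_le_mul_of_nonneg_left key this.le]

theorem aux_strict {E : Type*} [NormedAddCommGroup E] [InnerProductSpace ℝ E]
    {p : ℝ} (hp : 1 < p) (a b : E) :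
    ‖(1/2 : ℝ) • (a + b)‖ ^ p ≤ (‖a‖ ^ p + ‖b‖ ^ p) / 2 ∧
    ((‖a‖ ^ p + ‖b‖ ^ p) / 2 - ‖(1/2 : ℝ) • (a + b)‖ ^ p = 0 → a = b) := by
  have h1 : ‖(1/2 : ℝ) • (a + b)‖ = (1/2) * ‖a + b‖ := by
    rw [norm_smul]; norm_num
  have h2 : (1/2) * ‖a + b‖ ≤ (1/2) * (‖a‖ + ‖b‖) := by
    have := norm_add_le a b; linarith
  have h3 : ((1/2) * ‖a + b‖) ^ p ≤ ((1/2) * (‖a‖ + ‖b‖)) ^ p :=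
    Real.rpow_le_rpow (by positivity) h2 (by linarith)
  have hc := (strictConvexOn_rpow hp)
  have h4 : ((1/2) * (‖a‖ + ‖b‖)) ^ p ≤ (‖a‖ ^ p + ‖b‖ ^ p) / 2 := by
    have := hc.convexOn.2 (mem_Ici.2 (norm_nonneg a)) (mem_Ici.2 (norm_nonneg b))
      (show (0:ℝ) ≤ 1/2 by norm_num) (show (0:ℝ) ≤ 1/2 by norm_num) (by norm_num)
    simp only [smul_eq_mul] at this
    calc _ = (1 / 2 * ‖a‖ + 1 / 2 * ‖b‖) ^ p := by ring_nf
      _ ≤ _ := this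
      _ = _ := by ring
  refine ⟨by rw [h1]; exact h3.trans h4, fun h => ?_⟩
  rw [h1] at h
  have e1 : ((1/2) * ‖a + b‖) ^ p = ((1/2) * (‖a‖ + ‖b‖)) ^ p := le_antisymm h3 (by linarith)
  have e2 : ((1/2) * (‖a‖ + ‖b‖)) ^ p = (‖a‖ ^ p + ‖b‖ ^ p) / 2 := le_antisymm h4 (by linarith)
  have e3 : ‖a + b‖ = ‖a‖ + ‖b‖ := by
    have := (Real.rpow_left_inj (by positivity) (by positivity) (by linarith : p ≠ 0)).1 e1
    linarith
  have e4 : ‖a‖ = ‖b‖ := by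
    by_contra hne
    have := hc.2 (mem_Ici.2 (norm_nonneg a)) (mem_Ici.2 (norm_nonneg b)) hne
      (show (0:ℝ) < 1/2 by norm_num) (show (0:ℝ) < 1/2 by norm_num) (by norm_num)
    simp only [smul_eq_mul] at this
    have e5 : (1 / 2 * ‖a‖ + 1 / 2 * ‖b‖) = (1/2) * (‖a‖ + ‖b‖) := by ring
    rw [e5, e2] at this
    linarith
  exact (sameRay_iff_norm_add.2 e3).eq_of_norm_eq e4

theorem aux_norm_smul_rpow {E : Type*} [NormedAddCommGroup E] [NormedSpace ℝ E]
    {p : ℝ} {t : ℝ} (ht : 0 < t) (a : E) : ‖t • a‖ ^ p = t ^ p * ‖a‖ ^ p := by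
  rw [norm_smul, Real.mul_rpow (norm_nonneg _) (norm_nonneg _), Real.norm_of_nonneg ht.le]

/-- Pointwise uniform convexity. -/
theorem aux_uc {E : Type*} [NormedAddCommGroup E] [InnerProductSpace ℝ E] [FiniteDimensional ℝ E]
    {p : ℝ} (hp : 1 < p) {ε : ℝ} (hε : 0 < ε) :
    ∃ C : ℝ, 0 ≤ C ∧ ∀ a b : E, ‖a - b‖ ^ p ≤ ε * (‖a‖ ^ p + ‖b‖ ^ p) +
      C * ((‖a‖ ^ p + ‖b‖ ^ p) / 2 - ‖(1/2 : ℝ) • (a + b)‖ ^ p) := by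
  have hp0 : 0 ≤ p := by linarith
  obtain ⟨C, hC, h⟩ := aux_template (V := E × E) (p := p) (by linarith)
    (fun x => ‖x.1 - x.2‖ ^ p)
    (fun x => (‖x.1‖ ^ p + ‖x.2‖ ^ p) / 2 - ‖(1/2 : ℝ) • (x.1 + x.2)‖ ^ p)
    (fun x => ‖x.1‖ ^ p + ‖x.2‖ ^ p)
    (by fun_prop (disch := simp [hp0])) (by fun_prop (disch := simp [hp0]))
    (by fun_prop (disch := simp [hp0]))
    (fun t ht x => by
      simp only [Prod.smul_fst, Prod.smul_snd, ← smul_sub, aux_norm_smul_rpow ht])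
    (fun t ht x => by
      simp only [Prod.smul_fst, Prod.smul_snd, ← smul_add, smul_comm (1/2 : ℝ) t,
        aux_norm_smul_rpow ht]; ring)
    (fun t ht x => by
      simp only [Prod.smul_fst, Prod.smul_snd, aux_norm_smul_rpow ht]; ring)
    (fun x => sub_nonneg.2 (aux_strict hp x.1 x.2).1)
    (fun x hx => by
      have : x.1 ≠ 0 ∨ x.2 ≠ 0 := by
        by_contra h; push Not at h; exact hx (Prod.ext h.1 h.2)
      rcases this with h | h
      · have := norm_pos_iff.2 h; positivity
      · have := norm_pos_iff.2 h; positivity)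
    (fun x hx => by
      have := (aux_strict hp x.1 x.2).2 hx
      simp [this, Real.zero_rpow (by linarith : p ≠ 0)]) hε
  exact ⟨C, hC, fun a b => h (a, b)⟩

/-- The duality map of `‖·‖^p / p`. -/
def dualMap {E : Type*} [NormedAddCommGroup E] [NormedSpace ℝ E] (p : ℝ) (a : E) : E :=
  ‖a‖ ^ (p - 2) • a

theorem norm_dualMap {E : Type*} [NormedAddCommGroup E] [NormedSpace ℝ E] {p : ℝ} (hp : 1 < p)
    (a : E) : ‖dualMap p a‖ = ‖a‖ ^ (p - 1) := by
  rw [dualMap, norm_smul, Real.norm_of_nonneg (by positivity)]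
  by_cases h : a = 0
  · subst h; simp [Real.zero_rpow (by linarith : p - 1 ≠ 0)]
  · rw [← Real.rpow_add_one (norm_ne_zero_iff.2 h)]; congr 1; ring

theorem continuous_dualMap {E : Type*} [NormedAddCommGroup E] [NormedSpace ℝ E] {p : ℝ}
    (hp : 1 < p) : Continuous (dualMap p : E → E) := by
  rw [continuous_iff_continuousAt]
  intro a
  by_cases h : a = 0
  · subst h
    have h0 : dualMap p (0 : E) = 0 := by simp [dualMap]
    rw [ContinuousAt, h0, tendsto_zero_iff_norm_tendsto_zero]
    simp_rw [norm_dualMap hp]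
    have : Continuous fun a : E => ‖a‖ ^ (p - 1) := by
      have : 0 ≤ p - 1 := by linarith
      fun_prop (disch := simp [this])
    have := this.tendsto 0
    simpa [Real.zero_rpow (by linarith : p - 1 ≠ 0)] using this
  · unfold dualMap
    have : ContinuousAt (fun a : E => ‖a‖ ^ (p - 2)) a :=
      continuous_norm.continuousAt.rpow_const (Or.inl (norm_ne_zero_iff.2 h))
    exact this.smul continuousAt_id

theorem dualMap_smul {E : Type*} [NormedAddCommGroup E] [NormedSpace ℝ E] {p : ℝ}
    {t : ℝ} (ht : 0 < t) (a : E) : dualMap p (t • a) = t ^ (p - 1) • dualMap p a := by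
  rw [dualMap, dualMap, aux_norm_smul_rpow ht, smul_smul, smul_smul]
  congr 1
  have : t ^ (p - 1) = t ^ (p - 2) * t := by
    rw [← Real.rpow_add_one ht.ne']; congr 1; ring
  rw [this]; ring

/-- Pointwise uniform continuity of the duality map. -/
theorem aux_nem {E : Type*} [NormedAddCommGroup E] [NormedSpace ℝ E] [FiniteDimensional ℝ E]
    {p : ℝ} (hp : 1 < p) {ε : ℝ} (hε : 0 < ε) :
    ∃ C : ℝ, 0 ≤ C ∧ ∀ a b c : E, ‖dualMap p a - dualMap p b‖ * ‖c‖ ≤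
      ε * (‖a‖ ^ p + ‖b‖ ^ p + ‖c‖ ^ p) + C * ‖a - b‖ ^ p := by
  have hp0 : 0 ≤ p := by linarith
  have hd := continuous_dualMap (E := E) hp
  obtain ⟨C, hC, h⟩ := aux_template (V := E × E × E) (p := p) (by linarith)
    (fun x => ‖dualMap p x.1 - dualMap p x.2.1‖ * ‖x.2.2‖)
    (fun x => ‖x.1 - x.2.1‖ ^ p)
    (fun x => ‖x.1‖ ^ p + ‖x.2.1‖ ^ p + ‖x.2.2‖ ^ p)
    (by fun_prop) (by fun_prop (disch := simp [hp0]))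
    (by fun_prop (disch := simp [hp0]))
    (fun t ht x => by
      simp only [Prod.smul_fst, Prod.smul_snd, dualMap_smul ht, ← smul_sub, norm_smul]
      rw [Real.norm_of_nonneg ht.le, Real.norm_of_nonneg (by positivity)]
      have : t ^ p = t ^ (p - 1) * t := by
        rw [← Real.rpow_add_one ht.ne']; congr 1; ring
      rw [this]; ring)
    (fun t ht x => by
      simp only [Prod.smul_fst, Prod.smul_snd, ← smul_sub, aux_norm_smul_rpow ht])
    (fun t ht x => by
      simp only [Prod.smul_fst, Prod.smul_snd, aux_norm_smul_rpow ht]; ring)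
    (fun x => by positivity)
    (fun x hx => by
      have : x.1 ≠ 0 ∨ x.2.1 ≠ 0 ∨ x.2.2 ≠ 0 := by
        by_contra h; push Not at h; exact hx (Prod.ext h.1 (Prod.ext h.2.1 h.2.2))
      rcases this with h | h | h
      · have := norm_pos_iff.2 h; positivity
      · have := norm_pos_iff.2 h; positivity
      · have := norm_pos_iff.2 h; positivity)
    (fun x hx => by
      have hx' : ‖x.1 - x.2.1‖ = 0 := (Real.rpow_eq_zero (norm_nonneg _) (by linarith)).1 hx
      have : x.1 = x.2.1 := by rwa [norm_sub_eq_zero_iff] at hx'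
      simp [this]) hε
  exact ⟨C, hC, fun a b c => h (a, b, c)⟩

/-- Pointwise Young inequality. -/
theorem aux_young {p : ℝ} (hp : 1 < p) {s t : ℝ} (hs : 0 ≤ s) (ht : 0 ≤ t) :
    s ^ (p - 1) * t ≤ (1 - 1 / p) * s ^ p + (1 / p) * t ^ p := by
  have hpq : (Real.conjExponent p).HolderConjugate p := (Real.HolderConjugate.conjExponent hp).symm
  have h := Real.young_inequality_of_nonneg (a := s ^ (p - 1)) (b := t) (by positivity) ht hpq
  have h1 : (s ^ (p - 1)) ^ (Real.conjExponent p) = s ^ p := by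
    rw [← Real.rpow_mul hs]; congr 1
    rw [Real.conjExponent]; field_simp [(by linarith : p - 1 ≠ 0)]
  rw [h1] at h
  have h2 : s ^ p / Real.conjExponent p = (1 - 1/p) * s ^ p := by
    rw [Real.conjExponent]
    have : p - 1 ≠ 0 := by linarith
    have : p ≠ 0 := by linarith
    field_simp
  rw [h2] at h
  calc _ ≤ _ := h
    _ = _ := by ring



section LpPart

variable {α : Type*} [MeasurableSpace α] {μ : Measure α}
variable {E : Type*} [NormedAddCommGroup E] [InnerProductSpace ℝ E]
variable {p : ℝ}

set_option linter.unusedSectionVars false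

theorem Lp_integrable (hp : 1 < p) (f : Lp E (ENNReal.ofReal p) μ) :
    Integrable (fun x => ‖f x‖ ^ p) μ := by
  have := (Lp.memLp f).integrable_norm_rpow (by simp; linarith) (by simp)
  rwa [ENNReal.toReal_ofReal (by linarith)] at this

theorem Lp_norm_rpow (hp : 1 < p) (f : Lp E (ENNReal.ofReal p) μ) :
    ‖f‖ ^ p = ∫ x, ‖f x‖ ^ p ∂μ := by
  have h := (Lp.memLp f).eLpNorm_eq_integral_rpow_norm (by simp; linarith) (by simp)
  rw [Lp.norm_def, h, ENNReal.toReal_ofReal (by positivity),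
    ENNReal.toReal_ofReal (by linarith : 0 ≤ p), ← Real.rpow_mul, inv_mul_cancel₀ (by linarith),
    Real.rpow_one]
  exact integral_nonneg fun x => by positivity

/-- The pairing `∫ ‖f‖^{p-2} ⟪f, g⟫`. -/
def pairD (p : ℝ) (f g : Lp E (ENNReal.ofReal p) μ) : ℝ :=
  ∫ x, ‖f x‖ ^ (p - 2) * ⟪f x, g x⟫ ∂μ

theorem aux_abs_dual (hp : 1 < p) (a c : E) :
    |‖a‖ ^ (p - 2) * ⟪a, c⟫| ≤ ‖a‖ ^ (p - 1) * ‖c‖ := by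
  have : ‖a‖ ^ (p - 2) * ⟪a, c⟫ = ⟪dualMap p a, c⟫ := by
    rw [dualMap, real_inner_smul_left]
  rw [this, ← norm_dualMap hp]
  exact abs_real_inner_le_norm _ _

theorem aux_young' (hp : 1 < p) {s t : ℝ} (hs : 0 ≤ s) (ht : 0 ≤ t) :
    s ^ (p - 1) * t ≤ s ^ p + t ^ p := by
  refine (aux_young hp hs ht).trans ?_
  have h1 : 0 < 1 / p := by positivity
  have h2 : 1 / p < 1 := by rw [div_lt_one (by linarith)]; exact hp
  have := Real.rpow_nonneg hs p
  have := Real.rpow_nonneg ht p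
  nlinarith

theorem aux_integrable_pair (hp : 1 < p) (f : Lp E (ENNReal.ofReal p) μ) {g : α → E}
    (hg : AEStronglyMeasurable g μ) (hgi : Integrable (fun x => ‖g x‖ ^ p) μ) :
    Integrable (fun x => ‖f x‖ ^ (p - 2) * ⟪f x, g x⟫) μ := by
  refine ((Lp_integrable hp f).add hgi).mono ?_ (ae_of_all _ fun x => ?_)
  · have hf := Lp.aestronglyMeasurable f
    exact ((hf.norm.aemeasurable.pow_const _).aestronglyMeasurable).mul (hf.inner hg)
  · rw [Real.norm_eq_abs, Real.norm_of_nonneg (by simp only [Pi.add_apply]; positivity)]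
    exact (aux_abs_dual hp _ _).trans (aux_young' hp (norm_nonneg _) (norm_nonneg _))

theorem pairD_integrable (hp : 1 < p) (f g : Lp E (ENNReal.ofReal p) μ) :
    Integrable (fun x => ‖f x‖ ^ (p - 2) * ⟪f x, g x⟫) μ :=
  aux_integrable_pair hp f (Lp.aestronglyMeasurable g) (Lp_integrable hp g)

theorem pairD_add (hp : 1 < p) (f g h : Lp E (ENNReal.ofReal p) μ) :
    pairD p f (g + h) = pairD p f g + pairD p f h := by
  rw [pairD, pairD, pairD, ← integral_add (pairD_integrable hp f g) (pairD_integrable hp f h)]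
  refine integral_congr_ae ?_
  filter_upwards [Lp.coeFn_add g h] with x hx
  rw [hx, Pi.add_apply, inner_add_right]; ring

theorem pairD_smul (f g : Lp E (ENNReal.ofReal p) μ) (c : ℝ) :
    pairD p f (c • g) = c * pairD p f g := by
  rw [pairD, pairD, ← integral_const_mul]
  refine integral_congr_ae ?_
  filter_upwards [Lp.coeFn_smul c g] with x hx
  rw [hx, Pi.smul_apply, inner_smul_right]; ring

theorem pairD_neg_right (f g : Lp E (ENNReal.ofReal p) μ) :
    pairD p f (-g) = - pairD p f g := by
  have := pairD_smul f g (-1)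
  simpa using this

theorem pairD_sub (hp : 1 < p) (f g h : Lp E (ENNReal.ofReal p) μ) :
    pairD p f (g - h) = pairD p f g - pairD p f h := by
  rw [sub_eq_add_neg, pairD_add hp, pairD_neg_right]; ring

theorem pairD_neg_left (f g : Lp E (ENNReal.ofReal p) μ) :
    pairD p (-f) g = - pairD p f g := by
  rw [pairD, pairD, ← integral_neg]
  refine integral_congr_ae ?_
  filter_upwards [Lp.coeFn_neg f] with x hx
  rw [hx, Pi.neg_apply, inner_neg_left, norm_neg]; ring

theorem pairD_smul_left {t : ℝ} (ht : 0 < t) (f g : Lp E (ENNReal.ofReal p) μ) :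
    pairD p (t • f) g = t ^ (p - 1) * pairD p f g := by
  rw [pairD, pairD, ← integral_const_mul]
  refine integral_congr_ae ?_
  filter_upwards [Lp.coeFn_smul t f] with x hx
  have h := dualMap_smul (p := p) ht (f x)
  have e : ∀ a c : E, ‖a‖ ^ (p - 2) * ⟪a, c⟫ = ⟪dualMap p a, c⟫ := fun a c => by
    rw [dualMap, real_inner_smul_left]
  rw [hx, Pi.smul_apply, e, e, h, real_inner_smul_left]

theorem pairD_self (hp : 1 < p) (f : Lp E (ENNReal.ofReal p) μ) :
    pairD p f f = ‖f‖ ^ p := by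
  rw [Lp_norm_rpow hp, pairD]
  refine integral_congr_ae (ae_of_all _ fun x => ?_)
  simp only
  rw [real_inner_self_eq_norm_sq]
  by_cases h : ‖f x‖ = 0
  · rw [h, Real.zero_rpow (by linarith : p ≠ 0)]; ring
  · rw [← Real.rpow_natCast, ← Real.rpow_add (by positivity)]; congr 1; push_cast; ring

theorem pairD_abs_le (hp : 1 < p) (f g : Lp E (ENNReal.ofReal p) μ) :
    |pairD p f g| ≤ (1 - 1 / p) * ‖f‖ ^ p + (1 / p) * ‖g‖ ^ p := by
  rw [Lp_norm_rpow hp, Lp_norm_rpow hp, ← integral_const_mul, ← integral_const_mul,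
    ← integral_add ((Lp_integrable hp f).const_mul _) ((Lp_integrable hp g).const_mul _)]
  refine (abs_integral_le_integral_abs).trans ?_
  refine integral_mono (pairD_integrable hp f g).abs
    (((Lp_integrable hp f).const_mul _).add ((Lp_integrable hp g).const_mul _)) (fun x => ?_)
  exact (aux_abs_dual hp _ _).trans (aux_young hp (norm_nonneg _) (norm_nonneg _))

theorem pairD_le_of_norm_one [Fact (1 ≤ ENNReal.ofReal p)] (hp : 1 < p)
    (f g : Lp E (ENNReal.ofReal p) μ) (hf : ‖f‖ = 1) :
    |pairD p f g| ≤ ‖g‖ := by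
  by_cases hg : g = 0
  · subst hg
    have := pairD_smul f (0 : Lp E (ENNReal.ofReal p) μ) 0
    simp at this; simp [this]
  · have hpos : 0 < ‖g‖ := norm_pos_iff.2 hg
    have h := pairD_abs_le hp f (‖g‖⁻¹ • g)
    rw [pairD_smul, hf, norm_smul, norm_inv, norm_norm, inv_mul_cancel₀ hpos.ne', Real.one_rpow,
      abs_mul, abs_of_pos (inv_pos.2 hpos)] at h
    have : ‖g‖⁻¹ * |pairD p f g| ≤ 1 := by linarith
    rwa [inv_mul_le_iff₀ hpos, mul_one] at this

/-- General bound, linear in `g`. -/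
theorem pairD_bound [Fact (1 ≤ ENNReal.ofReal p)] (hp : 1 < p)
    (f : Lp E (ENNReal.ofReal p) μ) :
    ∃ C : ℝ, 0 ≤ C ∧ ∀ g : Lp E (ENNReal.ofReal p) μ, |pairD p f g| ≤ C * ‖g‖ := by
  by_cases hf : f = 0
  · refine ⟨0, le_rfl, fun g => ?_⟩
    have : pairD p f g = 0 := by
      subst hf
      have := pairD_neg_left (0 : Lp E (ENNReal.ofReal p) μ) g
      rw [neg_zero] at this; linarith
    simp [this]
  · have hpos : 0 < ‖f‖ := norm_pos_iff.2 hf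
    refine ⟨‖f‖ ^ (p - 1), by positivity, fun g => ?_⟩
    have h := pairD_le_of_norm_one hp (‖f‖⁻¹ • f) g (by
      rw [norm_smul, norm_inv, norm_norm, inv_mul_cancel₀ hpos.ne'])
    have e : f = ‖f‖ • (‖f‖⁻¹ • f) := by rw [smul_smul, mul_inv_cancel₀ hpos.ne', one_smul]
    conv_lhs => rw [e]
    rw [pairD_smul_left hpos, abs_mul, abs_of_pos (by positivity)]
    exact mul_le_mul_of_nonneg_left h (by positivity)

/-- `pairD p f` as a continuous linear functional. -/
def pairL [Fact (1 ≤ ENNReal.ofReal p)] (hp : 1 < p) (f : Lp E (ENNReal.ofReal p) μ) :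
    Lp E (ENNReal.ofReal p) μ →L[ℝ] ℝ :=
  LinearMap.mkContinuousOfExistsBound
    { toFun := pairD p f
      map_add' := pairD_add hp f
      map_smul' := fun c g => by simp [pairD_smul] }
    (by obtain ⟨C, _, h⟩ := pairD_bound hp f; exact ⟨C, h⟩)

theorem pairL_apply [Fact (1 ≤ ENNReal.ofReal p)] (hp : 1 < p)
    (f g : Lp E (ENNReal.ofReal p) μ) : pairL hp f g = pairD p f g := rfl

/-- Uniform convexity of `L^p`. -/
theorem Lp_uc [FiniteDimensional ℝ E] (hp : 1 < p) {ε : ℝ} (hε : 0 < ε) :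
    ∃ C : ℝ, 0 ≤ C ∧ ∀ a b : Lp E (ENNReal.ofReal p) μ,
      ‖(1/2 : ℝ) • (a + b)‖ ^ p ≤ (‖a‖ ^ p + ‖b‖ ^ p) / 2 ∧
      ‖a - b‖ ^ p ≤ ε * (‖a‖ ^ p + ‖b‖ ^ p) +
      C * ((‖a‖ ^ p + ‖b‖ ^ p) / 2 - ‖(1/2 : ℝ) • (a + b)‖ ^ p) := by
  obtain ⟨C, hC, h⟩ := aux_uc (E := E) hp hε
  refine ⟨C, hC, fun a b => ?_⟩
  have ia := Lp_integrable hp a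
  have ib := Lp_integrable hp b
  have iab : Integrable (fun x => ‖(1/2 : ℝ) • (a x + b x)‖ ^ p) μ := by
    refine (Lp_integrable hp ((1/2 : ℝ) • (a + b))).congr ?_
    filter_upwards [Lp.coeFn_smul (1/2 : ℝ) (a + b), Lp.coeFn_add a b] with x h1 h2
    rw [h1, Pi.smul_apply, h2, Pi.add_apply]
  have e1 : ‖(1/2 : ℝ) • (a + b)‖ ^ p = ∫ x, ‖(1/2 : ℝ) • (a x + b x)‖ ^ p ∂μ := by
    rw [Lp_norm_rpow hp]
    refine integral_congr_ae ?_
    filter_upwards [Lp.coeFn_smul (1/2 : ℝ) (a + b), Lp.coeFn_add a b] with x h1 h2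
    rw [h1, Pi.smul_apply, h2, Pi.add_apply]
  have e2 : ‖a - b‖ ^ p = ∫ x, ‖a x - b x‖ ^ p ∂μ := by
    rw [Lp_norm_rpow hp]
    refine integral_congr_ae ?_
    filter_upwards [Lp.coeFn_sub a b] with x h1
    rw [h1, Pi.sub_apply]
  have is : Integrable (fun x => ‖a x - b x‖ ^ p) μ := by
    refine (Lp_integrable hp (a - b)).congr ?_
    filter_upwards [Lp.coeFn_sub a b] with x h1
    rw [h1, Pi.sub_apply]
  have e3 : (‖a‖ ^ p + ‖b‖ ^ p) = ∫ x, (‖a x‖ ^ p + ‖b x‖ ^ p) ∂μ := by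
    rw [Lp_norm_rpow hp, Lp_norm_rpow hp, ← integral_add ia ib]
  rw [e1, e2, e3]
  constructor
  · rw [← integral_div]
    exact integral_mono iab ((ia.add ib).div_const 2) fun x => (aux_strict hp _ _).1
  · have i1 : Integrable (fun x => (‖a x‖ ^ p + ‖b x‖ ^ p) / 2) μ := (ia.add ib).div_const 2
    have i2 : Integrable (fun x => ε * (‖a x‖ ^ p + ‖b x‖ ^ p)) μ := (ia.add ib).const_mul ε
    have i3 : Integrable (fun x => C * ((‖a x‖ ^ p + ‖b x‖ ^ p) / 2 -
      ‖(1/2 : ℝ) • (a x + b x)‖ ^ p)) μ := (i1.sub iab).const_mul C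
    rw [← integral_div, ← integral_sub i1 iab, ← integral_const_mul,
      ← integral_const_mul, ← integral_add i2 i3]
    exact integral_mono is (i2.add i3) fun x => h _ _

/-- Continuity of `f ↦ pairD p f`. -/
theorem pairD_cont [FiniteDimensional ℝ E] (hp : 1 < p) {ε : ℝ} (hε : 0 < ε) :
    ∃ C : ℝ, 0 ≤ C ∧ ∀ a b g : Lp E (ENNReal.ofReal p) μ,
      |pairD p a g - pairD p b g| ≤ ε * (‖a‖ ^ p + ‖b‖ ^ p + ‖g‖ ^ p) + C * ‖a - b‖ ^ p := by
  obtain ⟨C, hC, h⟩ := aux_nem (E := E) hp hε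
  refine ⟨C, hC, fun a b g => ?_⟩
  have ia := Lp_integrable hp a
  have ib := Lp_integrable hp b
  have ig := Lp_integrable hp g
  have e2 : ‖a - b‖ ^ p = ∫ x, ‖a x - b x‖ ^ p ∂μ := by
    rw [Lp_norm_rpow hp]
    refine integral_congr_ae ?_
    filter_upwards [Lp.coeFn_sub a b] with x h1
    rw [h1, Pi.sub_apply]
  have is : Integrable (fun x => ‖a x - b x‖ ^ p) μ := by
    refine (Lp_integrable hp (a - b)).congr ?_
    filter_upwards [Lp.coeFn_sub a b] with x h1
    rw [h1, Pi.sub_apply]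
  have e3 : (‖a‖ ^ p + ‖b‖ ^ p + ‖g‖ ^ p) = ∫ x, (‖a x‖ ^ p + ‖b x‖ ^ p + ‖g x‖ ^ p) ∂μ := by
    rw [Lp_norm_rpow hp, Lp_norm_rpow hp, Lp_norm_rpow hp, ← integral_add ia ib]
    exact (integral_add (ia.add ib) ig).symm
  have iF := pairD_integrable hp a g
  have iG := pairD_integrable hp b g
  have i3 : Integrable (fun x => ε * (‖a x‖ ^ p + ‖b x‖ ^ p + ‖g x‖ ^ p)) μ :=
    ((ia.add ib).add ig).const_mul ε
  have i4 := is.const_mul C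
  rw [e2, e3, pairD, pairD, ← integral_sub iF iG, ← integral_const_mul, ← integral_const_mul]
  rw [← integral_add i3 i4]
  refine (abs_integral_le_integral_abs).trans (integral_mono (iF.sub iG).abs (i3.add i4) ?_)
  intro x
  refine le_trans ?_ (h (a x) (b x) (g x))
  have : ‖a x‖ ^ (p - 2) * ⟪a x, g x⟫ - ‖b x‖ ^ (p - 2) * ⟪b x, g x⟫ =
      ⟪dualMap p (a x) - dualMap p (b x), g x⟫ := by
    rw [inner_sub_left, dualMap, dualMap, real_inner_smul_left, real_inner_smul_left]
  simp only
  rw [this]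
  exact abs_real_inner_le_norm _ _

/-- Derivative of `‖f + t g‖^p`. -/
theorem Lp_hasDerivAt (hp : 1 < p) (f g : Lp E (ENNReal.ofReal p) μ) :
    HasDerivAt (fun t : ℝ => ‖f + t • g‖ ^ p) (p * pairD p f g) 0 := by
  have e : (fun t : ℝ => ‖f + t • g‖ ^ p) = fun t : ℝ => ∫ x, ‖f x + t • g x‖ ^ p ∂μ := by
    funext t
    rw [Lp_norm_rpow hp]
    refine integral_congr_ae ?_
    filter_upwards [Lp.coeFn_smul t g, Lp.coeFn_add f (t • g)] with x h1 h2
    rw [h2, Pi.add_apply, h1, Pi.smul_apply]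
  have hmeas := Lp.aestronglyMeasurable f
  have hmeasg := Lp.aestronglyMeasurable g
  rw [e]
  have key := hasDerivAt_integral_of_dominated_loc_of_deriv_le (μ := μ) (𝕜 := ℝ)
    (F := fun (t : ℝ) x => ‖f x + t • g x‖ ^ p)
    (F' := fun (t : ℝ) x => p * (‖f x + t • g x‖ ^ (p - 2) * ⟪f x + t • g x, g x⟫))
    (x₀ := 0) (s := ball 0 1)
    (bound := fun x => p * ((2 ^ p * (‖f x‖ ^ p + ‖g x‖ ^ p)) + ‖g x‖ ^ p))
    (ball_mem_nhds _ one_pos) ?_ ?_ ?_ ?_ ?_ ?_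
  · have e2 : p * pairD p f g = ∫ x, p * (‖f x + (0 : ℝ) • g x‖ ^ (p - 2) *
        ⟪f x + (0 : ℝ) • g x, g x⟫) ∂μ := by
      simp only [pairD, ← integral_const_mul, zero_smul, add_zero]
    rw [e2]
    exact key.2
  · refine Eventually.of_forall fun t => ?_
    exact ((hmeas.add (hmeasg.const_smul t)).norm.aemeasurable.pow_const _).aestronglyMeasurable
  · simpa using Lp_integrable hp f
  · simp only [zero_smul, add_zero]
    exact ((pairD_integrable hp f g).const_mul p).aestronglyMeasurable
  · refine ae_of_all _ fun x t ht => ?_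
    rw [norm_mul, Real.norm_of_nonneg (by linarith : 0 ≤ p)]
    refine mul_le_mul_of_nonneg_left ?_ (by linarith)
    refine (aux_abs_dual hp _ _).trans ((aux_young' hp (norm_nonneg _) (norm_nonneg _)).trans ?_)
    gcongr
    have h1 : ‖f x + t • g x‖ ≤ ‖f x‖ + ‖g x‖ := by
      refine (norm_add_le _ _).trans ?_
      gcongr
      rw [norm_smul]
      have : ‖t‖ ≤ 1 := by simpa using (mem_ball.1 ht).le
      nlinarith [norm_nonneg (g x)]
    have h2 : ‖f x‖ + ‖g x‖ ≤ 2 * max ‖f x‖ ‖g x‖ := by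
      have := le_max_left ‖f x‖ ‖g x‖
      have := le_max_right ‖f x‖ ‖g x‖
      linarith
    calc ‖f x + t • g x‖ ^ p ≤ (2 * max ‖f x‖ ‖g x‖) ^ p :=
          Real.rpow_le_rpow (norm_nonneg _) (h1.trans h2) (by linarith)
      _ = 2 ^ p * (max ‖f x‖ ‖g x‖) ^ p := Real.mul_rpow (by norm_num) (by positivity)
      _ ≤ 2 ^ p * (‖f x‖ ^ p + ‖g x‖ ^ p) := by
          gcongr
          rcases max_choice ‖f x‖ ‖g x‖ with h | h <;> rw [h]
          · have : 0 ≤ ‖g x‖ ^ p := by positivity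
            linarith
          · have : 0 ≤ ‖f x‖ ^ p := by positivity
            linarith
  · exact ((((Lp_integrable hp f).add (Lp_integrable hp g)).const_mul _).add
      (Lp_integrable hp g)).const_mul p
  · refine ae_of_all _ fun x t ht => ?_
    have h1 := hasFDerivAt_norm_rpow (f x + t • g x) hp
    have h2 : HasDerivAt (fun t : ℝ => f x + t • g x) (g x) t := by
      simpa using ((hasDerivAt_id t).smul_const (g x)).const_add (f x)
    have := h1.comp_hasDerivAt t h2
    have e2 : p * (‖f x + t • g x‖ ^ (p - 2) * ⟪f x + t • g x, g x⟫) =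
        ((p * ‖f x + t • g x‖ ^ (p - 2)) • (innerSL ℝ) (f x + t • g x)) (g x) := by
      rw [ContinuousLinearMap.smul_apply, innerSL_apply_apply, smul_eq_mul, mul_assoc]
    rw [e2]
    exact this

end LpPart


section Variational

variable {α : Type*} [MeasurableSpace α] {μ : Measure α}
variable {F E : Type*} [NormedAddCommGroup F] [InnerProductSpace ℝ F] [FiniteDimensional ℝ F]
  [NormedAddCommGroup E] [InnerProductSpace ℝ E] [FiniteDimensional ℝ E]
variable {p : ℝ} [Fact (1 ≤ ENNReal.ofReal p)]

set_option linter.unusedSectionVars false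

/-- The `p`-th power of the Sobolev norm. -/
def JJ (p : ℝ) (w : Lp F (ENNReal.ofReal p) μ × Lp E (ENNReal.ofReal p) μ) : ℝ :=
  ‖w.1‖ ^ p + ‖w.2‖ ^ p

theorem JJ_nonneg (w : Lp F (ENNReal.ofReal p) μ × Lp E (ENNReal.ofReal p) μ) : 0 ≤ JJ p w := by
  unfold JJ; positivity

theorem JJ_smul {t : ℝ} (ht : 0 < t)
    (w : Lp F (ENNReal.ofReal p) μ × Lp E (ENNReal.ofReal p) μ) :
    JJ p (t • w) = t ^ p * JJ p w := by
  simp only [JJ, Prod.smul_fst, Prod.smul_snd, aux_norm_smul_rpow ht]; ring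

theorem JJ_neg (w : Lp F (ENNReal.ofReal p) μ × Lp E (ENNReal.ofReal p) μ) :
    JJ p (-w) = JJ p w := by
  simp [JJ]

theorem JJ_continuous (hp : 1 < p) :
    Continuous (JJ p : Lp F (ENNReal.ofReal p) μ × Lp E (ENNReal.ofReal p) μ → ℝ) := by
  have hp0 : 0 ≤ p := by linarith
  unfold JJ
  fun_prop (disch := simp [hp0])

theorem JJ_zero (hp : 1 < p) :
    JJ p (0 : Lp F (ENNReal.ofReal p) μ × Lp E (ENNReal.ofReal p) μ) = 0 := by
  simp [JJ, Real.zero_rpow (by linarith : p ≠ 0)]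

theorem norm_rpow_le_JJ (w : Lp F (ENNReal.ofReal p) μ × Lp E (ENNReal.ofReal p) μ) :
    ‖w‖ ^ p ≤ JJ p w := by
  have h1 : 0 ≤ ‖w.1‖ ^ p := by positivity
  have h2 : 0 ≤ ‖w.2‖ ^ p := by positivity
  unfold JJ
  rw [Prod.norm_def]
  rcases max_choice ‖w.1‖ ‖w.2‖ with h | h <;> rw [h] <;> linarith

theorem JJ_eq_zero (hp : 1 < p) {w : Lp F (ENNReal.ofReal p) μ × Lp E (ENNReal.ofReal p) μ}
    (h : JJ p w = 0) : w = 0 := by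
  have h1 := norm_rpow_le_JJ w
  rw [h] at h1
  have h2 : ‖w‖ ^ p = 0 := le_antisymm h1 (by positivity)
  exact norm_eq_zero.1 ((Real.rpow_eq_zero (norm_nonneg _) (by linarith)).1 h2)

theorem JJ_norm_le_one (hp : 1 < p) {w : Lp F (ENNReal.ofReal p) μ × Lp E (ENNReal.ofReal p) μ}
    (h : JJ p w ≤ 1) : ‖w‖ ≤ 1 := by
  have h1 := (norm_rpow_le_JJ w).trans h
  by_contra hc
  push Not at hc
  have := Real.one_lt_rpow hc (by linarith : 0 < p)
  linarith

theorem JJ_fst_le_one (hp : 1 < p) {w : Lp F (ENNReal.ofReal p) μ × Lp E (ENNReal.ofReal p) μ}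
    (h : JJ p w ≤ 1) : ‖w.1‖ ≤ 1 := (norm_fst_le w).trans (JJ_norm_le_one hp h)

/-- Convergence in terms of `JJ`. -/
theorem tendsto_of_JJ (hp : 1 < p) {ι : Type*} {l : Filter ι}
    {v : ι → Lp F (ENNReal.ofReal p) μ × Lp E (ENNReal.ofReal p) μ}
    (h : ∀ ε > 0, ∀ᶠ i in l, JJ p (v i) ≤ ε) : Tendsto v l (𝓝 0) := by
  rw [Metric.tendsto_nhds]
  intro ε hε
  filter_upwards [h ((ε / 2) ^ p) (by positivity)] with i hi
  have h1 := (norm_rpow_le_JJ (v i)).trans hi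
  rw [Real.rpow_le_rpow_iff (norm_nonneg _) (by positivity) (by linarith)] at h1
  rw [dist_zero_right]; linarith

theorem JJ_uc (hp : 1 < p) {ε : ℝ} (hε : 0 < ε) :
    ∃ C : ℝ, 0 ≤ C ∧ ∀ a b : Lp F (ENNReal.ofReal p) μ × Lp E (ENNReal.ofReal p) μ,
      JJ p (a - b) ≤ ε * (JJ p a + JJ p b) +
      C * ((JJ p a + JJ p b) / 2 - JJ p ((1/2 : ℝ) • (a + b))) := by
  obtain ⟨C1, h1, H1⟩ := Lp_uc (E := F) (μ := μ) hp hε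
  obtain ⟨C2, h2, H2⟩ := Lp_uc (E := E) (μ := μ) hp hε
  refine ⟨C1 + C2, by positivity, fun a b => ?_⟩
  obtain ⟨x1, y1⟩ := H1 a.1 b.1
  obtain ⟨x2, y2⟩ := H2 a.2 b.2
  simp only [JJ, Prod.fst_sub, Prod.snd_sub, Prod.smul_fst, Prod.smul_snd, Prod.fst_add,
    Prod.snd_add]
  nlinarith [mul_nonneg h1 (sub_nonneg.2 x2), mul_nonneg h2 (sub_nonneg.2 x1)]

variable (W : Submodule ℝ (Lp F (ENNReal.ofReal p) μ × Lp E (ENNReal.ofReal p) μ))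

/-- The dual norm of `pairD p u` on `W`. -/
def MM (u : Lp F (ENNReal.ofReal p) μ) : ℝ :=
  sSup ((fun w : Lp F (ENNReal.ofReal p) μ × Lp E (ENNReal.ofReal p) μ => pairD p u w.1) ''
    {w | w ∈ W ∧ JJ p w ≤ 1})

theorem MM_bdd (hp : 1 < p) (u : Lp F (ENNReal.ofReal p) μ) :
    BddAbove ((fun w : Lp F (ENNReal.ofReal p) μ × Lp E (ENNReal.ofReal p) μ => pairD p u w.1) ''
    {w | w ∈ W ∧ JJ p w ≤ 1}) := by
  obtain ⟨C, hC, h⟩ := pairD_bound hp u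
  refine ⟨C, ?_⟩
  rintro _ ⟨w, ⟨_, hw⟩, rfl⟩
  refine (le_abs_self _).trans ((h w.1).trans ?_)
  have := JJ_fst_le_one hp hw
  nlinarith

variable {W}

theorem le_MM (hp : 1 < p) (u : Lp F (ENNReal.ofReal p) μ)
    {w : Lp F (ENNReal.ofReal p) μ × Lp E (ENNReal.ofReal p) μ} (hw : w ∈ W) (h : JJ p w ≤ 1) :
    pairD p u w.1 ≤ MM W u := le_csSup (MM_bdd W hp u) ⟨w, ⟨hw, h⟩, rfl⟩

theorem MM_nonneg (hp : 1 < p) (u : Lp F (ENNReal.ofReal p) μ) : 0 ≤ MM W u := by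
  have := le_MM hp u (W.zero_mem) (by rw [JJ_zero hp]; norm_num)
  have h := pairD_smul u (0 : Lp F (ENNReal.ofReal p) μ) 0
  simp only [zero_smul, zero_mul] at h
  simpa [h] using this

theorem JJ_normalize (hp : 1 < p) {w : Lp F (ENNReal.ofReal p) μ × Lp E (ENNReal.ofReal p) μ}
    (h : 0 < JJ p w) : JJ p ((JJ p w ^ (1 / p))⁻¹ • w) = 1 := by
  have hp0 : p ≠ 0 := by linarith
  rw [JJ_smul (by positivity), Real.inv_rpow (by positivity), ← Real.rpow_mul h.le,
    one_div_mul_cancel hp0, Real.rpow_one, inv_mul_cancel₀ h.ne']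

theorem le_MM_mul (hp : 1 < p) (u : Lp F (ENNReal.ofReal p) μ)
    {w : Lp F (ENNReal.ofReal p) μ × Lp E (ENNReal.ofReal p) μ} (hw : w ∈ W) :
    pairD p u w.1 ≤ MM W u * JJ p w ^ (1 / p) := by
  rcases (JJ_nonneg w).eq_or_lt with h | h
  · have := JJ_eq_zero hp h.symm
    subst this
    have h := pairD_smul u (0 : Lp F (ENNReal.ofReal p) μ) 0
    simp only [zero_smul, zero_mul] at h
    rw [Prod.fst_zero, h]
    exact mul_nonneg (MM_nonneg hp u) (Real.rpow_nonneg (JJ_nonneg _) _)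
  · have h1 := le_MM hp u (W.smul_mem (JJ p w ^ (1 / p))⁻¹ hw) (JJ_normalize hp h).le
    rw [Prod.smul_fst, pairD_smul, inv_mul_le_iff₀ (by positivity)] at h1
    linarith

/-- Almost maximizers are close to each other. -/
theorem near_max (hp : 1 < p) {ε : ℝ} (hε : 0 < ε) :
    ∃ δ : ℝ, 0 < δ ∧ ∀ (W : Submodule ℝ (Lp F (ENNReal.ofReal p) μ × Lp E (ENNReal.ofReal p) μ))
      (u : Lp F (ENNReal.ofReal p) μ), 0 < MM W u → ∀ a ∈ W, ∀ b ∈ W, JJ p a ≤ 1 → JJ p b ≤ 1 →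
      (1 - δ) * MM W u ≤ pairD p u a.1 → (1 - δ) * MM W u ≤ pairD p u b.1 → JJ p (a - b) ≤ ε := by
  obtain ⟨C, hC, H⟩ := JJ_uc (F := F) (E := E) (μ := μ) hp (show 0 < ε / 4 by positivity)
  -- choose δ with C (1 - (1-δ)^p) ≤ ε/2
  have hcont : Tendsto (fun δ : ℝ => C * (1 - (1 - δ) ^ p)) (𝓝[>] 0) (𝓝 0) := by
    have : Continuous (fun δ : ℝ => C * (1 - (1 - δ) ^ p)) := by
      have hp0 : 0 ≤ p := by linarith
      fun_prop (disch := simp [hp0])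
    have h2 := this.tendsto 0
    simp only [sub_zero, Real.one_rpow, sub_self, mul_zero] at h2
    exact h2.mono_left nhdsWithin_le_nhds
  have h1 : ∀ᶠ δ in 𝓝[>] (0 : ℝ), C * (1 - (1 - δ) ^ p) < ε / 2 :=
    hcont.eventually_lt_const (by positivity)
  have h2 : ∀ᶠ δ in 𝓝[>] (0 : ℝ), δ < 1 :=
    nhdsWithin_le_nhds (gt_mem_nhds one_pos)
  obtain ⟨δ, ⟨hδ1, hδ2⟩, hδ0⟩ := ((h1.and h2).and self_mem_nhdsWithin).exists
  have hδ0' : 0 < δ := hδ0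
  refine ⟨δ, hδ0', fun W u hM a ha b hb hJa hJb hla hlb => ?_⟩
  have h3 := le_MM_mul hp u (W.smul_mem (1/2 : ℝ) (W.add_mem ha hb))
  rw [Prod.smul_fst, pairD_smul, Prod.fst_add, pairD_add hp] at h3
  have h4 : (1 - δ) ≤ JJ p ((1/2 : ℝ) • (a + b)) ^ (1 / p) := by
    have : (1 - δ) * MM W u ≤ MM W u * JJ p ((1/2 : ℝ) • (a + b)) ^ (1 / p) := by linarith
    rw [mul_comm] at this
    exact le_of_mul_le_mul_left this hM
  have h5 : (1 - δ) ^ p ≤ JJ p ((1/2 : ℝ) • (a + b)) := by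
    have := Real.rpow_le_rpow (by linarith) h4 (by linarith : 0 ≤ p)
    rwa [← Real.rpow_mul (JJ_nonneg _), one_div_mul_cancel (by linarith), Real.rpow_one] at this
  have h6 := H a b
  have h7 : (JJ p a + JJ p b) / 2 - JJ p ((1/2 : ℝ) • (a + b)) ≤ 1 - (1 - δ) ^ p := by linarith
  have h8 := mul_le_mul_of_nonneg_left h7 hC
  nlinarith

/-- `v` is a maximizer. -/
def IsMaxer (W : Submodule ℝ (Lp F (ENNReal.ofReal p) μ × Lp E (ENNReal.ofReal p) μ))
    (u : Lp F (ENNReal.ofReal p) μ) (v : Lp F (ENNReal.ofReal p) μ × Lp E (ENNReal.ofReal p) μ) :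
    Prop := v ∈ W ∧ JJ p v ≤ 1 ∧ pairD p u v.1 = MM W u

theorem exists_maxer (hp : 1 < p) (hW : IsClosed (W : Set (Lp F (ENNReal.ofReal p) μ ×
    Lp E (ENNReal.ofReal p) μ))) (u : Lp F (ENNReal.ofReal p) μ) (hM : 0 < MM W u) :
    ∃ v, IsMaxer W u v := by
  have hex : ∀ n : ℕ, ∃ v ∈ W, JJ p v ≤ 1 ∧ (1 - 1 / ((n : ℝ) + 1)) * MM W u ≤ pairD p u v.1 := by
    intro n
    have : (1 - 1 / ((n : ℝ) + 1)) * MM W u < MM W u := by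
      have : (0 : ℝ) < 1 / ((n : ℝ) + 1) := by positivity
      nlinarith
    have hne' : ({w | w ∈ W ∧ JJ p w ≤ 1} : Set (Lp F (ENNReal.ofReal p) μ ×
      Lp E (ENNReal.ofReal p) μ)).Nonempty := ⟨0, W.zero_mem, by rw [JJ_zero hp]; norm_num⟩
    obtain ⟨_, ⟨v, ⟨hv, hJ⟩, rfl⟩, h⟩ := exists_lt_of_lt_csSup (hne'.image _) this
    exact ⟨v, hv, hJ, h.le⟩
  choose v hvW hvJ hv using hex
  have hlim : Tendsto (fun n : ℕ => (1 : ℝ) / ((n : ℝ) + 1)) atTop (𝓝 0) :=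
    tendsto_one_div_add_atTop_nhds_zero_nat
  have hc : CauchySeq v := by
    rw [Metric.cauchySeq_iff]
    intro ε hε
    obtain ⟨δ, hδ, H⟩ := near_max (F := F) (E := E) (μ := μ) hp
      (show 0 < (ε / 2) ^ p by positivity)
    obtain ⟨n0, hn0⟩ := eventually_atTop.1 (hlim.eventually_lt_const hδ)
    refine ⟨n0, fun m hm n hn => ?_⟩
    have hh : ∀ n ≥ n0, (1 - δ) * MM W u ≤ pairD p u (v n).1 := fun n hn =>
      le_trans (by have := hn0 n hn; nlinarith) (hv n)
    have h1 := (norm_rpow_le_JJ _).trans (H W u hM (v m) (hvW m) (v n) (hvW n) (hvJ m) (hvJ n)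
      (hh m hm) (hh n hn))
    rw [Real.rpow_le_rpow_iff (norm_nonneg _) (by positivity) (by linarith)] at h1
    rw [dist_eq_norm]; linarith
  obtain ⟨v0, hv0⟩ := cauchySeq_tendsto_of_complete hc
  have hv0W : v0 ∈ W := hW.mem_of_tendsto hv0 (Eventually.of_forall hvW)
  have hJ0 : JJ p v0 ≤ 1 := le_of_tendsto (((JJ_continuous hp).tendsto v0).comp hv0)
    (Eventually.of_forall hvJ)
  refine ⟨v0, hv0W, hJ0, le_antisymm (le_MM hp u hv0W hJ0) ?_⟩
  have h1 : Tendsto (fun n => pairD p u (v n).1) atTop (𝓝 (pairD p u v0.1)) :=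
    (((pairL hp u).continuous.comp continuous_fst).tendsto v0).comp hv0
  have h2 : Tendsto (fun n : ℕ => (1 - 1 / ((n : ℝ) + 1)) * MM W u) atTop (𝓝 (MM W u)) := by
    simpa using (hlim.const_sub 1).mul_const (MM W u)
  exact le_of_tendsto_of_tendsto' h2 h1 hv

theorem IsMaxer.JJ_eq (hp : 1 < p) {u : Lp F (ENNReal.ofReal p) μ}
    {v : Lp F (ENNReal.ofReal p) μ × Lp E (ENNReal.ofReal p) μ} (h : IsMaxer W u v)
    (hM : 0 < MM W u) : JJ p v = 1 := by
  refine le_antisymm h.2.1 ?_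
  have h1 := le_MM_mul hp u h.1
  rw [h.2.2] at h1
  have h2 : 1 ≤ JJ p v ^ (1 / p) := by
    by_contra hc; push Not at hc; nlinarith
  by_contra hc; push Not at hc
  have := Real.rpow_lt_one (JJ_nonneg v) hc (by positivity : 0 < 1 / p)
  linarith

/-- Euler-Lagrange equation. -/
theorem IsMaxer.euler (hp : 1 < p) {u : Lp F (ENNReal.ofReal p) μ}
    {v : Lp F (ENNReal.ofReal p) μ × Lp E (ENNReal.ofReal p) μ} (h : IsMaxer W u v)
    (hM : 0 < MM W u) {φ : Lp F (ENNReal.ofReal p) μ × Lp E (ENNReal.ofReal p) μ} (hφ : φ ∈ W) :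
    pairD p v.1 φ.1 + pairD p v.2 φ.2 = (MM W u)⁻¹ * pairD p u φ.1 := by
  have hJ := h.JJ_eq hp hM
  have hd : HasDerivAt (fun t : ℝ => JJ p (v + t • φ))
      (p * pairD p v.1 φ.1 + p * pairD p v.2 φ.2) 0 :=
    (Lp_hasDerivAt hp v.1 φ.1).add (Lp_hasDerivAt hp v.2 φ.2)
  have hd2 := hd.rpow_const (p := 1 / p) (Or.inl (by simp [hJ]))
  have hd3 : HasDerivAt (fun t : ℝ => pairD p u (v + t • φ).1) (pairD p u φ.1) 0 := by
    have e : (fun t : ℝ => pairD p u (v + t • φ).1) =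
        fun t => pairD p u v.1 + t * pairD p u φ.1 := by
      funext t
      rw [Prod.fst_add, Prod.smul_fst, pairD_add hp, pairD_smul]
    rw [e]
    simpa using ((hasDerivAt_id (0 : ℝ)).mul_const (pairD p u φ.1)).const_add (pairD p u v.1)
  have hd4 := (hd2.const_mul (MM W u)).sub hd3
  have hmin : IsLocalMin ((fun t : ℝ => MM W u * JJ p (v + t • φ) ^ (1 / p)) -
      fun t : ℝ => pairD p u (v + t • φ).1) 0 := by
    refine Eventually.of_forall fun t => ?_
    simp only [zero_smul, add_zero, hJ, h.2.2, Real.one_rpow, mul_one, sub_self, Pi.sub_apply]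
    exact sub_nonneg.2 (le_MM_mul hp u (W.add_mem h.1 (W.smul_mem t hφ)))
  have h0 := hmin.hasDerivAt_eq_zero hd4
  simp only [zero_smul, add_zero, hJ, Real.one_rpow, mul_one] at h0
  have hp0 : p ≠ 0 := by linarith
  have : MM W u * (pairD p v.1 φ.1 + pairD p v.2 φ.2) = pairD p u φ.1 := by
    field_simp at h0
    linarith
  rw [← this, inv_mul_cancel_left₀ hM.ne']

/-- Uniform convergence of functionals. -/
theorem pairD_tendsto_unif (hp : 1 < p) {ι : Type*} {l : Filter ι}
    {u : ι → Lp F (ENNReal.ofReal p) μ} {u0 : Lp F (ENNReal.ofReal p) μ}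
    (hu : Tendsto u l (𝓝 u0)) {ε : ℝ} (hε : 0 < ε) :
    ∀ᶠ i in l, ∀ g : Lp F (ENNReal.ofReal p) μ, ‖g‖ ≤ 1 → |pairD p (u i) g - pairD p u0 g| ≤ ε := by
  have hB : 0 < (‖u0‖ + 1) ^ p + ‖u0‖ ^ p + 1 := by positivity
  obtain ⟨C, hC, H⟩ := pairD_cont (E := F) (μ := μ) hp
    (show 0 < ε / 2 / ((‖u0‖ + 1) ^ p + ‖u0‖ ^ p + 1) by positivity)
  have hp0 : 0 ≤ p := by linarith
  have h1 : Tendsto (fun i => C * ‖u i - u0‖ ^ p) l (𝓝 0) := by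
    have hc : Continuous (fun x : Lp F (ENNReal.ofReal p) μ => C * ‖x - u0‖ ^ p) := by
      fun_prop (disch := simp [hp0])
    have h0 : C * ‖u0 - u0‖ ^ p = 0 := by simp [Real.zero_rpow (by linarith : p ≠ 0)]
    rw [← h0]
    exact (hc.tendsto u0).comp hu
  have h2 : ∀ᶠ i in l, ‖u i‖ < ‖u0‖ + 1 :=
    (hu.norm).eventually_lt_const (by linarith)
  filter_upwards [h1.eventually_lt_const (show 0 < ε / 2 by positivity), h2] with i hi1 hi2 g hg
  refine (H (u i) u0 g).trans ?_
  have h3 : ‖u i‖ ^ p + ‖u0‖ ^ p + ‖g‖ ^ p ≤ (‖u0‖ + 1) ^ p + ‖u0‖ ^ p + 1 := by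
    gcongr
    exact Real.rpow_le_one (norm_nonneg _) hg hp0
  have h4 : ε / 2 / ((‖u0‖ + 1) ^ p + ‖u0‖ ^ p + 1) * (‖u i‖ ^ p + ‖u0‖ ^ p + ‖g‖ ^ p)
      ≤ ε / 2 := by
    rw [div_mul_eq_mul_div, div_le_iff₀ hB]
    exact mul_le_mul_of_nonneg_left h3 (by positivity)
  linarith

theorem MM_tendsto (hp : 1 < p) {ι : Type*} {l : Filter ι}
    {u : ι → Lp F (ENNReal.ofReal p) μ} {u0 : Lp F (ENNReal.ofReal p) μ}
    (hu : Tendsto u l (𝓝 u0)) : Tendsto (fun i => MM W (u i)) l (𝓝 (MM W u0)) := by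
  rw [Metric.tendsto_nhds]
  intro ε hε
  filter_upwards [pairD_tendsto_unif hp hu (show 0 < ε / 2 by positivity)] with i hi
  have hne' : ({w | w ∈ W ∧ JJ p w ≤ 1} : Set (Lp F (ENNReal.ofReal p) μ ×
    Lp E (ENNReal.ofReal p) μ)).Nonempty := ⟨0, W.zero_mem, by rw [JJ_zero hp]; norm_num⟩
  have h1 : MM W (u i) ≤ MM W u0 + ε / 2 := by
    refine csSup_le (hne'.image _) ?_
    rintro _ ⟨w, ⟨hw, hJ⟩, rfl⟩
    have := abs_le.1 (hi w.1 (JJ_fst_le_one hp hJ))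
    have := le_MM hp u0 hw hJ
    simp only; linarith
  have h2 : MM W u0 ≤ MM W (u i) + ε / 2 := by
    refine csSup_le (hne'.image _) ?_
    rintro _ ⟨w, ⟨hw, hJ⟩, rfl⟩
    have := abs_le.1 (hi w.1 (JJ_fst_le_one hp hJ))
    have := le_MM hp (u i) hw hJ
    simp only; linarith
  rw [Real.dist_eq, abs_lt]
  constructor <;> linarith

/-- Continuity of the maximizer. -/
theorem maxer_tendsto (hp : 1 < p) {ι : Type*} {l : Filter ι}
    {u : ι → Lp F (ENNReal.ofReal p) μ} {u0 : Lp F (ENNReal.ofReal p) μ}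
    (hu : Tendsto u l (𝓝 u0)) (hM : 0 < MM W u0)
    {v : ι → Lp F (ENNReal.ofReal p) μ × Lp E (ENNReal.ofReal p) μ}
    {v0 : Lp F (ENNReal.ofReal p) μ × Lp E (ENNReal.ofReal p) μ}
    (hv : ∀ᶠ i in l, IsMaxer W (u i) (v i)) (hv0 : IsMaxer W u0 v0) :
    Tendsto v l (𝓝 v0) := by
  have key : Tendsto (fun i => v i - v0) l (𝓝 0) := by
    refine tendsto_of_JJ hp fun ε hε => ?_
    obtain ⟨δ, hδ, H⟩ := near_max (F := F) (E := E) (μ := μ) hp hε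
    have hMt := MM_tendsto (W := W) hp hu
    have h1 : ∀ᶠ i in l, MM W u0 / 2 < MM W (u i) := hMt.eventually_const_lt (by linarith)
    have h2 : ∀ᶠ i in l, MM W (u i) < MM W u0 + δ * MM W u0 / 4 :=
      hMt.eventually_lt_const (by have := mul_pos hδ hM; linarith)
    filter_upwards [hv, h1, h2, pairD_tendsto_unif hp hu
      (show 0 < δ * MM W u0 / 4 by positivity)] with i hi hi1 hi2 hi3
    refine H W (u i) (by linarith) (v i) hi.1 v0 hv0.1 hi.2.1 hv0.2.1 ?_ ?_
    · rw [hi.2.2]; nlinarith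
    · have := abs_le.1 (hi3 v0.1 (JJ_fst_le_one hp hv0.2.1))
      rw [hv0.2.2] at this
      nlinarith
  simpa using key.add_const v0

theorem maxer_unique (hp : 1 < p) {u : Lp F (ENNReal.ofReal p) μ} (hM : 0 < MM W u)
    {v v' : Lp F (ENNReal.ofReal p) μ × Lp E (ENNReal.ofReal p) μ}
    (hv : IsMaxer W u v) (hv' : IsMaxer W u v') : v = v' := by
  have := maxer_tendsto (l := (pure () : Filter Unit)) (u := fun _ => u) (v := fun _ => v) hp
    (tendsto_const_nhds) hM (by simpa using hv) hv'
  exact tendsto_nhds_unique tendsto_const_nhds this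

theorem MM_neg (u : Lp F (ENNReal.ofReal p) μ) : MM W (-u) = MM W u := by
  unfold MM
  congr 1
  ext y
  constructor
  · rintro ⟨w, ⟨hw, hJ⟩, rfl⟩
    exact ⟨-w, ⟨W.neg_mem hw, by rwa [JJ_neg]⟩, by
      simp only [Prod.fst_neg, pairD_neg_left, pairD_neg_right]⟩
  · rintro ⟨w, ⟨hw, hJ⟩, rfl⟩
    exact ⟨-w, ⟨W.neg_mem hw, by rwa [JJ_neg]⟩, by
      simp only [Prod.fst_neg, pairD_neg_left, pairD_neg_right, neg_neg]⟩

theorem IsMaxer.neg {u : Lp F (ENNReal.ofReal p) μ}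
    {v : Lp F (ENNReal.ofReal p) μ × Lp E (ENNReal.ofReal p) μ} (hv : IsMaxer W u v) :
    IsMaxer W (-u) (-v) :=
  ⟨W.neg_mem hv.1, by rw [JJ_neg]; exact hv.2.1, by
    rw [Prod.fst_neg, pairD_neg_left, pairD_neg_right, neg_neg, MM_neg, hv.2.2]⟩

end Variational


section MulOps

/-- Pointwise application of a bounded measurable family of operators. -/
theorem exists_mulOp {α : Type*} [MeasurableSpace α] {μ : Measure α} {F E : Type*}
    [NormedAddCommGroup F] [NormedSpace ℝ F] [NormedAddCommGroup E] [NormedSpace ℝ E]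
    {q : ℝ≥0∞} [Fact (1 ≤ q)] {A : α → F →L[ℝ] E} (hA : AEStronglyMeasurable A μ) {C : ℝ}
    (hC : 0 ≤ C) (hAC : ∀ x, ‖A x‖ ≤ C) :
    ∃ T : Lp F q μ →L[ℝ] Lp E q μ, (∀ f : Lp F q μ, T f =ᵐ[μ] fun x => A x (f x)) ∧
      ∀ f, ‖T f‖ ≤ C * ‖f‖ := by
  have hm : ∀ f : Lp F q μ, AEStronglyMeasurable (fun x => A x (f x)) μ := fun f =>
    ((ContinuousLinearMap.apply ℝ E).flip.aestronglyMeasurable_comp₂ hA (Lp.aestronglyMeasurable f))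
  have hb : ∀ (f : Lp F q μ) x, ‖A x (f x)‖ ≤ C * ‖f x‖ := fun f x =>
    (A x).le_of_opNorm_le (hAC x) _
  have hmem : ∀ f : Lp F q μ, MemLp (fun x => A x (f x)) q μ := fun f =>
    (Lp.memLp f).of_le_mul (hm f) (ae_of_all _ (hb f))
  let L : Lp F q μ →ₗ[ℝ] Lp E q μ :=
    { toFun := fun f => (hmem f).toLp _
      map_add' := fun f g => by
        rw [← MemLp.toLp_add]
        refine MemLp.toLp_congr _ _ ?_
        filter_upwards [Lp.coeFn_add f g] with x hx
        simp only [Pi.add_apply] at hx ⊢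
        rw [hx, map_add]
      map_smul' := fun c f => by
        rw [RingHom.id_apply, ← MemLp.toLp_const_smul]
        refine MemLp.toLp_congr _ _ ?_
        filter_upwards [Lp.coeFn_smul c f] with x hx
        simp [hx] }
  have hL : ∀ f, ‖L f‖ ≤ C * ‖f‖ := fun f => by
    refine Lp.norm_le_mul_norm_of_ae_le_mul ?_
    filter_upwards [(hmem f).coeFn_toLp] with x hx
    change ‖(hmem f).toLp _ x‖ ≤ _
    rw [hx]; exact hb f x
  exact ⟨L.mkContinuous C hL, fun f => (hmem f).coeFn_toLp, hL⟩

end MulOps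

section W10Part

variable {N : ℕ} {p : ℝ}

theorem gradient_norm_eq (f : EucN N → ℝ) (x : EucN N) : ‖gradient f x‖ = ‖fderiv ℝ f x‖ := by
  simp [gradient]

theorem continuous_gradient {f : EucN N → ℝ} (hf : ContDiff ℝ (⊤ : ℕ∞) f) :
    Continuous (gradient f) := by
  unfold gradient
  exact (LinearIsometryEquiv.continuous _).comp (hf.continuous_fderiv (by simp))

theorem IsTestFun.diff {Ω : Set (EucN N)} {f : EucN N → ℝ} (hf : IsTestFun Ω f) (x : EucN N) :
    DifferentiableAt ℝ f x := hf.1.differentiable (by simp) x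

theorem gradient_add' {f g : EucN N → ℝ} {x : EucN N} (hf : DifferentiableAt ℝ f x)
    (hg : DifferentiableAt ℝ g x) : gradient (f + g) x = gradient f x + gradient g x := by
  simp [gradient, fderiv_add hf hg]

theorem gradient_smul' {f : EucN N → ℝ} {x : EucN N} (c : ℝ) (hf : DifferentiableAt ℝ f x) :
    gradient (c • f) x = c • gradient f x := by
  simp [gradient, fderiv_const_smul hf c]

theorem gradient_mul' {f g : EucN N → ℝ} {x : EucN N} (hf : DifferentiableAt ℝ f x)
    (hg : DifferentiableAt ℝ g x) :
    gradient (fun y => f y * g y) x = f x • gradient g x + g x • gradient f x := by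
  simp [gradient, fderiv_fun_mul hf hg]

theorem IsTestFun.gradient_compact {Ω : Set (EucN N)} {f : EucN N → ℝ} (hf : IsTestFun Ω f) :
    HasCompactSupport (gradient f) := by
  have : gradient f = (InnerProductSpace.toDual ℝ (EucN N)).symm ∘ fderiv ℝ f := rfl
  rw [this]
  exact (hf.2.1.fderiv ℝ).comp_left (by simp)

theorem IsTestFun.memLp {Ω : Set (EucN N)} {f : EucN N → ℝ} (hf : IsTestFun Ω f) (q : ℝ≥0∞) :
    MemLp f q volume := hf.1.continuous.memLp_of_hasCompactSupport hf.2.1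

theorem IsTestFun.memLp_gradient {Ω : Set (EucN N)} {f : EucN N → ℝ} (hf : IsTestFun Ω f)
    (q : ℝ≥0∞) : MemLp (gradient f) q volume :=
  (continuous_gradient hf.1).memLp_of_hasCompactSupport hf.gradient_compact

/-- The submodule of test pairs. -/
def testSub (N : ℕ) (q : ℝ≥0∞) (Ω : Set (EucN N)) : Submodule ℝ (SobPair N q) where
  carrier := {w | IsTestPair q Ω w}
  zero_mem' := by
    refine ⟨0, ⟨contDiff_const, HasCompactSupport.zero, by simp [tsupport]⟩, ?_, ?_⟩
    · exact Lp.coeFn_zero _ _ _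
    · filter_upwards [Lp.coeFn_zero (EucN N) q (volume : Measure (EucN N))] with x hx
      simp only [Prod.snd_zero]
      rw [hx]; simp [gradient]
  add_mem' := by
    rintro a b ⟨f, hf, hf1, hf2⟩ ⟨g, hg, hg1, hg2⟩
    refine ⟨f + g, ⟨hf.1.add hg.1, hf.2.1.add hg.2.1, ?_⟩, ?_, ?_⟩
    · exact (tsupport_add f g).trans (union_subset hf.2.2 hg.2.2)
    · filter_upwards [Lp.coeFn_add a.1 b.1, hf1, hg1] with x h1 h2 h3
      simp only [Prod.fst_add]
      rw [h1, Pi.add_apply, h2, h3, Pi.add_apply]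
    · filter_upwards [Lp.coeFn_add a.2 b.2, hf2, hg2] with x h1 h2 h3
      simp only [Prod.snd_add]
      rw [h1, Pi.add_apply, h2, h3, gradient_add' (hf.diff x) (hg.diff x)]
  smul_mem' := by
    rintro c a ⟨f, hf, hf1, hf2⟩
    refine ⟨c • f, ⟨contDiff_const.smul hf.1, ?_, ?_⟩, ?_, ?_⟩
    · exact hf.2.1.smul_left (f := fun _ => c)
    · exact (tsupport_smul_subset_right (fun _ => c) f).trans hf.2.2
    · filter_upwards [Lp.coeFn_smul c a.1, hf1] with x h1 h2
      simp only [Prod.smul_fst]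
      rw [h1, Pi.smul_apply, h2, Pi.smul_apply]
    · filter_upwards [Lp.coeFn_smul c a.2, hf2] with x h1 h2
      simp only [Prod.smul_snd]
      rw [h1, Pi.smul_apply, h2, gradient_smul' c (hf.diff x)]

/-- The Sobolev space as a submodule. -/
def WW (N : ℕ) (p : ℝ) [Fact (1 ≤ ENNReal.ofReal p)] (Ω : Set (EucN N)) :
    Submodule ℝ (SobPair N (ENNReal.ofReal p)) :=
  (testSub N (ENNReal.ofReal p) Ω).topologicalClosure

theorem WW_closed [Fact (1 ≤ ENNReal.ofReal p)] (Ω : Set (EucN N)) :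
    IsClosed (WW N p Ω : Set (SobPair N (ENNReal.ofReal p))) :=
  Submodule.isClosed_topologicalClosure _

theorem mem_WW [Fact (1 ≤ ENNReal.ofReal p)] {Ω : Set (EucN N)} (hp : 1 ≤ p)
    {w : SobPair N (ENNReal.ofReal p)} : w ∈ WW N p Ω ↔ w ∈ W10 N p hp Ω := Iff.rfl

/-- Multiplication by smooth functions. -/
theorem exists_mulPair [Fact (1 ≤ ENNReal.ofReal p)] {Ω Ω' : Set (EucN N)} {η : EucN N → ℝ}
    (hη : ContDiff ℝ (⊤ : ℕ∞) η) {C C' : ℝ} (hC : ∀ x, |η x| ≤ C) (hC' : ∀ x, ‖gradient η x‖ ≤ C')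
    (hs : Ω ∩ tsupport η ⊆ Ω') {w : SobPair N (ENNReal.ofReal p)} (hw : w ∈ WW N p Ω) :
    ∃ (a : Lp ℝ (ENNReal.ofReal p) (volume : Measure (EucN N)))
      (b d : Lp (EucN N) (ENNReal.ofReal p) (volume : Measure (EucN N))), (a, b + d) ∈ WW N p Ω' ∧
      (⇑a =ᵐ[volume] fun x => η x * w.1 x) ∧ (⇑b =ᵐ[volume] fun x => η x • w.2 x) ∧
      (⇑d =ᵐ[volume] fun x => w.1 x • gradient η x) ∧ ‖a‖ ≤ C * ‖w.1‖ ∧ ‖b‖ ≤ C * ‖w.2‖ ∧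
      ‖d‖ ≤ C' * ‖w.1‖ := by
  have h0 : 0 ≤ C := (abs_nonneg _).trans (hC 0)
  have h0' : 0 ≤ C' := (norm_nonneg _).trans (hC' 0)
  obtain ⟨T1, hT1, hN1⟩ := exists_mulOp (μ := (volume : Measure (EucN N)))
    (q := ENNReal.ofReal p) (A := fun x => η x • ContinuousLinearMap.id ℝ ℝ)
    (hη.continuous.smul continuous_const).aestronglyMeasurable h0
    (fun x => by rw [norm_smul]; simpa using hC x)
  obtain ⟨T2, hT2, hN2⟩ := exists_mulOp (μ := (volume : Measure (EucN N)))
    (q := ENNReal.ofReal p) (A := fun x => η x • ContinuousLinearMap.id ℝ (EucN N))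
    (hη.continuous.smul continuous_const).aestronglyMeasurable h0
    (fun x => by
      rw [norm_smul]
      refine (mul_le_mul_of_nonneg_left ContinuousLinearMap.norm_id_le (norm_nonneg _)).trans ?_
      simpa using hC x)
  obtain ⟨T3, hT3, hN3⟩ := exists_mulOp (μ := (volume : Measure (EucN N)))
    (q := ENNReal.ofReal p) (A := fun x => ContinuousLinearMap.toSpanSingleton ℝ (gradient η x))
    (((ContinuousLinearMap.toSpanSingletonCLE).continuous.comp
      (continuous_gradient hη)).aestronglyMeasurable) h0'
    (fun x => by rw [ContinuousLinearMap.norm_toSpanSingleton]; exact hC' x)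
  refine ⟨T1 w.1, T2 w.2, T3 w.1, ?_, ?_, ?_, ?_, hN1 _, hN2 _, hN3 _⟩
  · have hcont : Continuous (fun w : SobPair N (ENNReal.ofReal p) => (T1 w.1, T2 w.2 + T3 w.1)) := by
      fun_prop
    refine map_mem_closure (f := fun w : SobPair N (ENNReal.ofReal p) =>
      (T1 w.1, T2 w.2 + T3 w.1)) hcont hw ?_
    rintro z ⟨f, hf, hf1, hf2⟩
    refine ⟨fun x => η x * f x, ⟨hη.mul hf.1, hf.2.1.mul_left, ?_⟩, ?_, ?_⟩
    · refine Subset.trans (subset_inter ?_ ?_) hs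
      · exact (tsupport_mul_subset_right (f := η) (g := f)).trans hf.2.2
      · exact tsupport_mul_subset_left (f := η) (g := f)
    · filter_upwards [hT1 z.1, hf1] with x h1 h2
      rw [h1]; simp [h2]
    · filter_upwards [hT2 z.2, hT3 z.1, Lp.coeFn_add (T2 z.2) (T3 z.1), hf1, hf2]
        with x h1 h2 h3 h4 h5
      rw [h3, Pi.add_apply, h1, h2, gradient_mul' (hη.differentiable (by simp) x) (hf.diff x)]
      simp [h4, h5]
  · filter_upwards [hT1 w.1] with x h1
    rw [h1]; simp
  · filter_upwards [hT2 w.2] with x h1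
    rw [h1]; simp
  · filter_upwards [hT3 w.1] with x h1
    rw [h1]; simp

end W10Part


section Cutoff

variable {N : ℕ} {p : ℝ}

theorem expNegInvGlue_rpow (hp : 1 < p) (x : ℝ) :
    expNegInvGlue x ^ p = expNegInvGlue (x / p) := by
  have hp0 : 0 < p := by linarith
  by_cases h : x ≤ 0
  · rw [expNegInvGlue.zero_of_nonpos h, expNegInvGlue.zero_of_nonpos (div_nonpos_of_nonpos_of_nonneg h hp0.le),
      Real.zero_rpow hp0.ne']
  · have h2 : ¬ (x / p ≤ 0) := by push Not at h ⊢; positivity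
    simp only [expNegInvGlue, h, h2, if_false]
    rw [← Real.exp_mul]
    congr 1
    rw [inv_div]; field_simp

theorem smoothTransition_rpow (hp : 1 < p) :
    ContDiff ℝ (⊤ : ℕ∞) (fun x => Real.smoothTransition x ^ p) := by
  have e : (fun x => Real.smoothTransition x ^ p) = fun x =>
      expNegInvGlue (x / p) / (expNegInvGlue x + expNegInvGlue (1 - x)) ^ p := by
    funext x
    rw [Real.smoothTransition, Real.div_rpow (expNegInvGlue.nonneg _)
      (add_nonneg (expNegInvGlue.nonneg _) (expNegInvGlue.nonneg _)), expNegInvGlue_rpow hp]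
  rw [e]
  have hpos := Real.smoothTransition.pos_denom
  refine ContDiff.div ?_ ?_ (fun x => (Real.rpow_pos_of_pos (hpos x) _).ne')
  · exact expNegInvGlue.contDiff.comp (contDiff_id.div_const p)
  · refine ContDiff.rpow_const_of_ne ?_ (fun x => (hpos x).ne')
    exact expNegInvGlue.contDiff.add (expNegInvGlue.contDiff.comp (contDiff_const.sub contDiff_id))

/-- gradient bound for functions constant at infinity. -/
theorem gradient_bdd {f : EucN N → ℝ} (hf : ContDiff ℝ (⊤ : ℕ∞) f)
    (h1 : ∀ x, 3 ≤ ‖x‖ → f x = 1) : ∃ C : ℝ, 0 ≤ C ∧ ∀ x, ‖gradient f x‖ ≤ C := by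
  have hcomp : HasCompactSupport (gradient f) := by
    refine HasCompactSupport.intro (isCompact_closedBall (0 : EucN N) 3) fun x hx => ?_
    have hx' : 3 < ‖x‖ := by simpa using hx
    have : f =ᶠ[𝓝 x] fun _ => 1 := by
      filter_upwards [continuous_norm.continuousAt.eventually_const_lt hx'] with y hy
      exact h1 y hy.le
    simp [gradient, this.fderiv_eq]
  obtain ⟨C, hC⟩ := hcomp.exists_bound_of_continuous (continuous_gradient hf)
  exact ⟨C, (norm_nonneg _).trans (hC 0), hC⟩

theorem gradient_scale {f : EucN N → ℝ} (R : ℝ) (x : EucN N) :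
    ‖gradient (fun y => f (R⁻¹ • y)) x‖ = |R|⁻¹ * ‖gradient f (R⁻¹ • x)‖ := by
  rw [gradient_norm_eq, gradient_norm_eq]
  have := fderiv_comp_smul (𝕜 := ℝ) (f := f) (x := x) R⁻¹
  rw [this, norm_smul, norm_inv, Real.norm_eq_abs]

theorem exists_cutoff (N : ℕ) (hp : 1 < p) : ∃ C : ℝ, 0 ≤ C ∧ ∀ R : ℝ, 0 < R →
    ∃ ψ : EucN N → ℝ, ContDiff ℝ (⊤ : ℕ∞) ψ ∧ ContDiff ℝ (⊤ : ℕ∞) (fun x => ψ x ^ p) ∧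
      (∀ x, 0 ≤ ψ x) ∧ (∀ x, ψ x ≤ 1) ∧ (∀ x, ‖gradient ψ x‖ ≤ C / R) ∧
      (∀ x, ‖gradient (fun x => ψ x ^ p) x‖ ≤ C / R) ∧ (∀ x, 3 * R ≤ ‖x‖ → ψ x = 1) ∧
      (∀ x, ‖x‖ ≤ 2 * R → ψ x = 0) := by
  have hin : ContDiff ℝ (⊤ : ℕ∞) (fun x : EucN N => ‖x‖ ^ 2 - 4) :=
    (contDiff_norm_sq ℝ).sub contDiff_const
  let Ψ : EucN N → ℝ := fun x => Real.smoothTransition (‖x‖ ^ 2 - 4)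
  have hΨ : ContDiff ℝ (⊤ : ℕ∞) Ψ := Real.smoothTransition.contDiff.comp hin
  have hΨp : ContDiff ℝ (⊤ : ℕ∞) (fun x => Ψ x ^ p) := (smoothTransition_rpow hp).comp hin
  have h1 : ∀ x, 3 ≤ ‖x‖ → Ψ x = 1 := fun x hx =>
    Real.smoothTransition.one_of_one_le (by nlinarith)
  obtain ⟨C1, hC1, H1⟩ := gradient_bdd hΨ h1
  obtain ⟨C2, hC2, H2⟩ := gradient_bdd hΨp (fun x hx => by rw [h1 x hx, Real.one_rpow])
  refine ⟨C1 + C2, by positivity, fun R hR => ⟨fun x => Ψ (R⁻¹ • x), ?_, ?_, ?_, ?_, ?_, ?_, ?_, ?_⟩⟩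
  · exact hΨ.comp (contDiff_const_smul _)
  · exact hΨp.comp (contDiff_const_smul _)
  · exact fun x => Real.smoothTransition.nonneg _
  · exact fun x => Real.smoothTransition.le_one _
  · intro x
    rw [gradient_scale, abs_of_pos hR, div_eq_inv_mul]
    have := H1 (R⁻¹ • x)
    gcongr; linarith
  · intro x
    have := gradient_scale (f := fun x => Ψ x ^ p) R x
    rw [this, abs_of_pos hR, div_eq_inv_mul]
    have := H2 (R⁻¹ • x)
    gcongr; linarith
  · intro x hx
    refine h1 _ ?_
    rw [norm_smul, norm_inv, Real.norm_of_nonneg hR.le, le_inv_mul_iff₀ hR]; linarith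
  · intro x hx
    refine Real.smoothTransition.zero_of_nonpos ?_
    have : ‖R⁻¹ • x‖ ≤ 2 := by
      rw [norm_smul, norm_inv, Real.norm_of_nonneg hR.le, inv_mul_le_iff₀ hR]; linarith
    nlinarith [norm_nonneg (R⁻¹ • x)]

/-- Poincare inequality from `lambda1p`. -/
theorem poincare [Fact (1 ≤ ENNReal.ofReal p)] (hp : 1 < p) {Ω : Set (EucN N)} {lam : ℝ}
    (h : ENNReal.ofReal lam ≤ lambda1p N p hp.le Ω) {w : SobPair N (ENNReal.ofReal p)}
    (hw : w ∈ WW N p Ω) : lam * ‖w.1‖ ^ p ≤ ‖w.2‖ ^ p := by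
  by_cases h0 : w.1 = 0
  · rw [h0, norm_zero, Real.zero_rpow (by linarith)]
    simp only [mul_zero]; positivity
  · have hpos : 0 < ‖w.1‖ := norm_pos_iff.2 h0
    have hm := (WW N p Ω).smul_mem ‖w.1‖⁻¹ hw
    have h1 : ENNReal.ofReal lam ≤ ENNReal.ofReal (∫ x, ‖(‖w.1‖⁻¹ • w).2 x‖ ^ p) := by
      refine h.trans (sInf_le ⟨‖w.1‖⁻¹ • w, hm, ?_, rfl⟩)
      have := Lp_norm_rpow hp (‖w.1‖⁻¹ • w).1
      simp only [Real.norm_eq_abs] at this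
      rw [← this, Prod.smul_fst, norm_smul, norm_inv, norm_norm, inv_mul_cancel₀ hpos.ne',
        Real.one_rpow]
    rw [← Lp_norm_rpow hp, ENNReal.ofReal_le_ofReal_iff (by positivity), Prod.smul_snd,
      aux_norm_smul_rpow (by positivity), Real.inv_rpow hpos.le,
      le_inv_mul_iff₀ (by positivity)] at h1
    linarith

end Cutoff


section Tight

theorem pairD_le_of_norm_le_one {α : Type*} [MeasurableSpace α] {μ : Measure α}
    {E : Type*} [NormedAddCommGroup E] [InnerProductSpace ℝ E] {p : ℝ}
    [Fact (1 ≤ ENNReal.ofReal p)] (hp : 1 < p) (f g : Lp E (ENNReal.ofReal p) μ) (hf : ‖f‖ ≤ 1) :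
    |pairD p f g| ≤ ‖g‖ := by
  by_cases hf0 : f = 0
  · have : pairD p f g = 0 := by
      subst hf0
      have := pairD_neg_left (0 : Lp E (ENNReal.ofReal p) μ) g
      rw [neg_zero] at this; linarith
    simp [this]
  · have hpos : 0 < ‖f‖ := norm_pos_iff.2 hf0
    have h := pairD_le_of_norm_one hp (‖f‖⁻¹ • f) g (by
      rw [norm_smul, norm_inv, norm_norm, inv_mul_cancel₀ hpos.ne'])
    have e : f = ‖f‖ • (‖f‖⁻¹ • f) := by rw [smul_smul, mul_inv_cancel₀ hpos.ne', one_smul]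
    conv_lhs => rw [e]
    rw [pairD_smul_left hpos, abs_mul, abs_of_pos (by positivity)]
    have h1 : ‖f‖ ^ (p - 1) ≤ 1 := Real.rpow_le_one hpos.le hf (by linarith)
    have h2 : 0 ≤ ‖f‖ ^ (p - 1) := by positivity
    nlinarith [abs_nonneg (pairD p (‖f‖⁻¹ • f) g)]

theorem rpow_unif {p κ : ℝ} (hp : 1 < p) (hκ : 0 < κ) : ∃ δ : ℝ, 0 < δ ∧ δ ≤ 1 ∧
    ∀ s t : ℝ, 0 ≤ s → s ≤ 1 → 0 ≤ t → t < δ → (s + t) ^ p ≤ s ^ p + κ := by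
  have hc : ContinuousOn (fun x : ℝ => x ^ p) (Icc 0 2) :=
    (Real.continuous_rpow_const (by linarith)).continuousOn
  have hu := isCompact_Icc.uniformContinuousOn_of_continuous hc
  rw [Metric.uniformContinuousOn_iff] at hu
  obtain ⟨δ, hδ, H⟩ := hu κ hκ
  refine ⟨min δ 1, by positivity, min_le_right _ _, fun s t hs hs1 ht htd => ?_⟩
  have h1 := lt_of_lt_of_le htd (min_le_left _ _)
  have h2 := lt_of_lt_of_le htd (min_le_right _ _)
  have := H (s + t) ⟨by linarith, by linarith⟩ s ⟨hs, by linarith⟩ (by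
    rw [Real.dist_eq]; simpa [abs_of_nonneg ht] using h1)
  rw [Real.dist_eq] at this
  have := (abs_lt.1 this).2
  linarith

theorem tight {N : ℕ} {p : ℝ} [Fact (1 ≤ ENNReal.ofReal p)] (hp : 1 < p) {Ω : Set (EucN N)}
    {c lam R0 : ℝ} (hR0 : 0 < R0) (hl : c < lam)
    (hPo : ENNReal.ofReal lam ≤ lambda1p N p hp.le (Ω \ closure (ball (0 : EucN N) R0)))
    {ε : ℝ} (hε : 0 < ε) :
    ∃ R : ℝ, 0 < R ∧ ∃ κ : ℝ, 0 < κ ∧ ∀ v ∈ WW N p Ω, JJ p v ≤ 1 →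
      (∀ φ ∈ WW N p Ω, ‖φ.1‖ ≤ 1 →
        pairD p v.1 φ.1 + pairD p v.2 φ.2 ≤ (c + 1) * pairD p v.1 φ.1 + κ) →
      ∫ x in {x | R ≤ ‖x‖}, ‖v.1 x‖ ^ p ≤ ε := by
  obtain ⟨C, hC, H⟩ := exists_cutoff N hp
  set κ := ε * (lam - c) / 4 with hκ_def
  have hκ : 0 < κ := by have := sub_pos.2 hl; positivity
  obtain ⟨δ, hδ, hδ1, Hδ⟩ := rpow_unif hp hκ
  have hRex : ∀ᶠ R : ℝ in atTop, R0 ≤ R ∧ C / R < κ ∧ C / R < δ := by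
    have ht : Tendsto (fun R : ℝ => C / R) atTop (𝓝 0) := tendsto_const_nhds.div_atTop tendsto_id
    filter_upwards [eventually_ge_atTop R0, ht.eventually_lt_const hκ, ht.eventually_lt_const hδ]
      with R h1 h2 h3 using ⟨h1, h2, h3⟩
  obtain ⟨R, hRR0, hRκ, hRδ⟩ := hRex.exists
  have hR : 0 < R := by linarith
  obtain ⟨ψ, hψ, hψp, hψ0, hψ1, hg, hgp, hone, hzero⟩ := H R hR
  have hp0 : 0 < p := by linarith
  refine ⟨3 * R, by positivity, κ, hκ, fun v hv hJ hE => ?_⟩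
  have hv1 : ‖v.1‖ ≤ 1 := JJ_fst_le_one hp hJ
  have hv2 : ‖v.2‖ ≤ 1 := (norm_snd_le v).trans (JJ_norm_le_one hp hJ)
  have hCR : 0 ≤ C / R := by positivity
  have hψp1 : ∀ x, |ψ x ^ p| ≤ 1 := fun x => by
    rw [abs_of_nonneg (Real.rpow_nonneg (hψ0 x) _)]
    exact Real.rpow_le_one (hψ0 x) (hψ1 x) hp0.le
  obtain ⟨a, b, d, hmem, ha, hb, hd, hna, hnb, hnd⟩ :=
    exists_mulPair hψp (Ω' := Ω) hψp1 hgp inter_subset_left hv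
  obtain ⟨a', b', d', hmem', ha', hb', hd', hna', hnb', hnd'⟩ :=
    exists_mulPair hψ (Ω' := Ω \ closure (ball (0 : EucN N) R0)) (C := 1)
      (fun x => by rw [abs_of_nonneg (hψ0 x)]; exact hψ1 x) hg (by
        rintro x ⟨hx, hxs⟩
        refine ⟨hx, fun hxc => ?_⟩
        have h1 : ‖x‖ ≤ R0 := by
          simpa using closure_ball_subset_closedBall hxc
        have h2 : tsupport ψ ⊆ {x | 2 * R ≤ ‖x‖} := by
          refine closure_minimal (fun y hy => ?_) (isClosed_le continuous_const continuous_norm)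
          by_contra hlt
          exact hy (hzero y (by simp only [mem_setOf_eq, not_le] at hlt; exact hlt.le))
        have h3 : 2 * R ≤ ‖x‖ := h2 hxs
        linarith) hv
  set A := ∫ x, ψ x ^ p * ‖v.1 x‖ ^ p with hA
  set B := ∫ x, ψ x ^ p * ‖v.2 x‖ ^ p with hB
  have hAa : pairD p v.1 a = A := by
    rw [pairD, hA]
    refine integral_congr_ae ?_
    filter_upwards [ha] with x hx
    rw [hx]
    have : ‖v.1 x‖ ^ (p - 2) * ⟪v.1 x, ψ x ^ p * v.1 x⟫ =
      ψ x ^ p * (‖v.1 x‖ ^ (p - 2) * ⟪v.1 x, v.1 x⟫) := by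
      rw [← smul_eq_mul (ψ x ^ p) (v.1 x), real_inner_smul_right]; ring
    rw [this, real_inner_self_eq_norm_sq]
    congr 1
    by_cases h : ‖v.1 x‖ = 0
    · rw [h, Real.zero_rpow hp0.ne']; ring
    · rw [← Real.rpow_natCast, ← Real.rpow_add (by positivity)]; congr 1; push_cast; ring
  have hBb : pairD p v.2 b = B := by
    rw [pairD, hB]
    refine integral_congr_ae ?_
    filter_upwards [hb] with x hx
    rw [hx]
    have : ‖v.2 x‖ ^ (p - 2) * ⟪v.2 x, ψ x ^ p • v.2 x⟫ =
      ψ x ^ p * (‖v.2 x‖ ^ (p - 2) * ⟪v.2 x, v.2 x⟫) := by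
      rw [real_inner_smul_right]; ring
    rw [this, real_inner_self_eq_norm_sq]
    congr 1
    by_cases h : ‖v.2 x‖ = 0
    · rw [h, Real.zero_rpow hp0.ne']; ring
    · rw [← Real.rpow_natCast, ← Real.rpow_add (by positivity)]; congr 1; push_cast; ring
  have hAa' : ‖a'‖ ^ p = A := by
    rw [Lp_norm_rpow hp, hA]
    refine integral_congr_ae ?_
    filter_upwards [ha'] with x hx
    rw [hx, norm_mul, Real.mul_rpow (norm_nonneg _) (norm_nonneg _), Real.norm_of_nonneg (hψ0 x)]
  have hBb' : ‖b'‖ ^ p = B := by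
    rw [Lp_norm_rpow hp, hB]
    refine integral_congr_ae ?_
    filter_upwards [hb'] with x hx
    rw [hx, norm_smul, Real.mul_rpow (norm_nonneg _) (norm_nonneg _), Real.norm_of_nonneg (hψ0 x)]
  -- Euler
  have h1 := hE _ hmem (by simp only; linarith)
  simp only [pairD_add hp, hAa, hBb] at h1
  have h2 := pairD_le_of_norm_le_one hp v.2 d hv2
  have h3 : ‖d‖ ≤ C / R := by nlinarith
  have h4 := (abs_le.1 h2).1
  -- Poincare
  have h5 := poincare hp hPo hmem'
  simp only [hAa'] at h5
  have h6 : ‖d'‖ ≤ C / R := by nlinarith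
  have h7 : ‖b' + d'‖ ^ p ≤ (‖b'‖ + ‖d'‖) ^ p :=
    Real.rpow_le_rpow (norm_nonneg _) (norm_add_le _ _) hp0.le
  have h8 := Hδ ‖b'‖ ‖d'‖ (norm_nonneg _) (by linarith) (norm_nonneg _) (by linarith)
  rw [hBb'] at h8
  have h9 : A ≤ ε := by
    have : (lam - c) * A ≤ (lam - c) * ε := by
      rw [hκ_def] at *
      nlinarith
    exact le_of_mul_le_mul_left this (by linarith)
  refine le_trans ?_ h9
  have hinteg : Integrable (fun x => ψ x ^ p * ‖v.1 x‖ ^ p) := by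
    refine (Lp_integrable hp v.1).bdd_mul (c := 1) hψp.continuous.aestronglyMeasurable ?_
    exact ae_of_all _ hψp1
  have hms : MeasurableSet {x : EucN N | 3 * R ≤ ‖x‖} := measurableSet_le measurable_const measurable_norm
  calc ∫ x in {x | 3 * R ≤ ‖x‖}, ‖v.1 x‖ ^ p
      = ∫ x in {x | 3 * R ≤ ‖x‖}, ψ x ^ p * ‖v.1 x‖ ^ p := by
        refine setIntegral_congr_fun hms fun x hx => ?_
        simp only [hone x hx, Real.one_rpow, one_mul]
    _ ≤ A := setIntegral_le_integral hinteg (ae_of_all _ fun x => by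
        have := hψ0 x
        simp only [Pi.zero_apply]; positivity)

end Tight


section Rellich

variable {N : ℕ} {p : ℝ}

theorem jensen_enn {α : Type*} [MeasurableSpace α] {μ : Measure α} (hp : 1 < p) {f : α → ℝ≥0∞}
    (hf : AEMeasurable f μ) : (∫⁻ x, f x ∂μ) ^ p ≤ μ univ ^ (p - 1) * ∫⁻ x, f x ^ p ∂μ := by
  have hp0 : 0 < p := by linarith
  have hpq : p.HolderConjugate (Real.conjExponent p) := Real.HolderConjugate.conjExponent hp
  have h := ENNReal.lintegral_mul_le_Lp_mul_Lq μ hpq hf (aemeasurable_const (b := (1 : ℝ≥0∞)))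
  simp only [Pi.mul_apply, mul_one, ENNReal.one_rpow, lintegral_const, one_mul] at h
  have h2 := ENNReal.rpow_le_rpow h hp0.le
  rw [ENNReal.mul_rpow_of_nonneg _ _ hp0.le, ← ENNReal.rpow_mul, ← ENNReal.rpow_mul,
    one_div_mul_cancel hp0.ne', ENNReal.rpow_one] at h2
  have e : 1 / Real.conjExponent p * p = p - 1 := by
    rw [Real.conjExponent]; field_simp
  rw [e] at h2
  rwa [mul_comm]

theorem translation_est (hp : 1 < p) {f : EucN N → ℝ} (hf : ContDiff ℝ (⊤ : ℕ∞) f) (h : EucN N) :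
    ∫⁻ x, ‖f (x + h) - f x‖ₑ ^ p ≤ ‖h‖ₑ ^ p * ∫⁻ x, ‖gradient f x‖ₑ ^ p := by
  have hp0 : 0 < p := by linarith
  have hg := continuous_gradient hf
  have hpt : ∀ x, ‖f (x + h) - f x‖ₑ ^ p ≤
      ‖h‖ₑ ^ p * ∫⁻ t in Ioc (0 : ℝ) 1, ‖gradient f (x + t • h)‖ₑ ^ p := by
    intro x
    have hd : ∀ t ∈ uIcc (0 : ℝ) 1, HasDerivAt (fun t : ℝ => f (x + t • h))
        (⟪gradient f (x + t • h), h⟫) t := by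
      intro t _
      have h1 : HasFDerivAt f (fderiv ℝ f (x + t • h)) (x + t • h) :=
        (hf.differentiable (by simp) _).hasFDerivAt
      have h2 : HasDerivAt (fun t : ℝ => x + t • h) h t := by
        simpa using ((hasDerivAt_id t).smul_const h).const_add x
      have := h1.comp_hasDerivAt t h2
      simpa [gradient, Function.comp_def] using this
    have hcont : Continuous (fun t : ℝ => ⟪gradient f (x + t • h), h⟫) := by fun_prop
    have hftc := intervalIntegral.integral_eq_sub_of_hasDerivAt hd (hcont.intervalIntegrable _ _)
    simp only [one_smul, zero_smul, add_zero] at hftc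
    rw [← hftc, intervalIntegral.integral_of_le zero_le_one]
    have h3 : ‖∫ t in Ioc (0 : ℝ) 1, ⟪gradient f (x + t • h), h⟫‖ₑ ≤
        ‖h‖ₑ * ∫⁻ t in Ioc (0 : ℝ) 1, ‖gradient f (x + t • h)‖ₑ := by
      refine (enorm_integral_le_lintegral_enorm _).trans ?_
      have hcg : Continuous (fun t : ℝ => gradient f (x + t • h)) := by fun_prop
      rw [← lintegral_const_mul _ hcg.measurable.enorm]
      refine lintegral_mono fun t => ?_
      have := norm_inner_le_norm (𝕜 := ℝ) (gradient f (x + t • h)) h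
      rw [mul_comm]
      rw [← ofReal_norm, ← ofReal_norm, ← ofReal_norm, ← ENNReal.ofReal_mul (norm_nonneg _)]
      exact ENNReal.ofReal_le_ofReal this
    refine (ENNReal.rpow_le_rpow h3 hp0.le).trans ?_
    rw [ENNReal.mul_rpow_of_nonneg _ _ hp0.le]
    gcongr
    have h4 := jensen_enn (μ := volume.restrict (Ioc (0 : ℝ) 1)) hp
      (f := fun t => ‖gradient f (x + t • h)‖ₑ) (by fun_prop)
    simpa using h4
  calc ∫⁻ x, ‖f (x + h) - f x‖ₑ ^ p
      ≤ ∫⁻ x, ‖h‖ₑ ^ p * ∫⁻ t in Ioc (0 : ℝ) 1, ‖gradient f (x + t • h)‖ₑ ^ p := lintegral_mono hpt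
    _ = ‖h‖ₑ ^ p * ∫⁻ x, ∫⁻ t in Ioc (0 : ℝ) 1, ‖gradient f (x + t • h)‖ₑ ^ p := by
        rw [lintegral_const_mul]
        refine Measurable.lintegral_prod_right' (f := fun z : EucN N × ℝ =>
          ‖gradient f (z.1 + z.2 • h)‖ₑ ^ p) ?_
        have : Continuous (fun z : EucN N × ℝ => gradient f (z.1 + z.2 • h)) := by fun_prop
        exact this.measurable.enorm.pow_const p
    _ = ‖h‖ₑ ^ p * ∫⁻ t in Ioc (0 : ℝ) 1, ∫⁻ x, ‖gradient f (x + t • h)‖ₑ ^ p := by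
        rw [lintegral_lintegral_swap]
        have : Continuous (fun z : EucN N × ℝ => gradient f (z.1 + z.2 • h)) := by fun_prop
        exact (this.measurable.enorm.pow_const p).aemeasurable
    _ = ‖h‖ₑ ^ p * ∫⁻ t in Ioc (0 : ℝ) 1, ∫⁻ x, ‖gradient f x‖ₑ ^ p := by
        congr 1
        refine lintegral_congr fun t => ?_
        exact lintegral_add_right_eq_self (fun x => ‖gradient f x‖ₑ ^ p) (t • h)
    _ = _ := by simp

/-- Averaged difference quotients. -/
theorem avg_est (hp : 1 < p) {f : EucN N → ℝ} (hf : ContDiff ℝ (⊤ : ℕ∞) f) (r : ℝ) :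
    ∫⁻ x, (∫⁻ h in ball (0 : EucN N) (2 * r), ‖f (x + h) - f x‖ₑ ^ p) ≤
      volume (ball (0 : EucN N) (2 * r)) * ENNReal.ofReal (2 * r) ^ p *
        ∫⁻ x, ‖gradient f x‖ₑ ^ p := by
  have hp0 : 0 < p := by linarith
  rw [lintegral_lintegral_swap]
  · calc ∫⁻ h in ball (0 : EucN N) (2 * r), ∫⁻ x, ‖f (x + h) - f x‖ₑ ^ p
        ≤ ∫⁻ h in ball (0 : EucN N) (2 * r), ENNReal.ofReal (2 * r) ^ p *
          ∫⁻ x, ‖gradient f x‖ₑ ^ p := by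
          refine setLIntegral_mono' measurableSet_ball fun h hh => ?_
          refine (translation_est hp hf h).trans ?_
          gcongr
          rw [← ofReal_norm]
          exact ENNReal.ofReal_le_ofReal (by simpa using (mem_ball_zero_iff.1 hh).le)
      _ = _ := by
          rw [setLIntegral_const]; ring
  · have hc := hf.continuous
    have : Continuous (fun z : EucN N × EucN N => f (z.1 + z.2) - f z.1) := by fun_prop
    exact (this.measurable.enorm.pow_const p).aemeasurable

/-- Pointwise estimate by local average. -/
theorem pt_est (hp : 1 < p) {f : EucN N → ℝ} (hf : Continuous f) {r : ℝ} (hr : 0 < r)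
    {x y : EucN N} (hx : x ∈ ball y r) :
    ‖f x‖ₑ ^ p ≤ 2 ^ (p - 1) * ((volume (ball (0 : EucN N) r))⁻¹ *
        (∫⁻ h in ball (0 : EucN N) (2 * r), ‖f (x + h) - f x‖ₑ ^ p) +
      ((volume (ball (0 : EucN N) r))⁻¹ * ‖∫ z in ball y r, f z‖ₑ) ^ p) := by
  have hp0 : 0 < p := by linarith
  set m := volume (ball (0 : EucN N) r) with hm
  have hm0 : m ≠ 0 := (measure_ball_pos _ _ hr).ne'
  have hmt : m ≠ ⊤ := measure_ball_lt_top.ne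
  have hmy : volume (ball y r) = m := Measure.addHaar_ball_center _ _ _
  have hinteg : IntegrableOn f (ball y r) :=
    (hf.continuousOn.integrableOn_compact (isCompact_closedBall y r)).mono_set ball_subset_closedBall
  -- triangle
  have h1 : m * ‖f x‖ₑ ≤ (∫⁻ z in ball y r, ‖f z - f x‖ₑ) + ‖∫ z in ball y r, f z‖ₑ := by
    have e : (volume.real (ball y r)) • f x = (∫ z in ball y r, f z) -
        ∫ z in ball y r, (f z - f x) := by
      rw [integral_sub hinteg (integrableOn_const (by rw [hmy]; exact hmt)), setIntegral_const]
      ring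
    have e2 : m * ‖f x‖ₑ = ‖(volume.real (ball y r)) • f x‖ₑ := by
      rw [enorm_smul, Measure.real, hmy]
      congr 1
      rw [Real.enorm_eq_ofReal ENNReal.toReal_nonneg, ENNReal.ofReal_toReal hmt]
    rw [e2, e, add_comm]
    refine (enorm_sub_le).trans ?_
    gcongr
    exact enorm_integral_le_lintegral_enorm _
  have h2 : ‖f x‖ₑ ≤ m⁻¹ * (∫⁻ z in ball y r, ‖f z - f x‖ₑ) + m⁻¹ * ‖∫ z in ball y r, f z‖ₑ := by
    rw [← mul_add]
    calc ‖f x‖ₑ = m⁻¹ * (m * ‖f x‖ₑ) := by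
          rw [← mul_assoc, ENNReal.inv_mul_cancel hm0 hmt, one_mul]
      _ ≤ _ := by gcongr
  refine (ENNReal.rpow_le_rpow h2 hp0.le).trans ?_
  refine (ENNReal.rpow_add_le_mul_rpow_add_rpow _ _ hp.le).trans ?_
  gcongr
  rw [ENNReal.mul_rpow_of_nonneg _ _ hp0.le]
  have h3 := jensen_enn (μ := volume.restrict (ball y r)) hp
      (f := fun z => ‖f z - f x‖ₑ) (by fun_prop)
  rw [Measure.restrict_apply_univ, hmy] at h3
  calc m⁻¹ ^ p * (∫⁻ z in ball y r, ‖f z - f x‖ₑ) ^ p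
      ≤ m⁻¹ ^ p * (m ^ (p - 1) * ∫⁻ z in ball y r, ‖f z - f x‖ₑ ^ p) := by gcongr
    _ = m⁻¹ * ∫⁻ z in ball y r, ‖f z - f x‖ₑ ^ p := by
        rw [← mul_assoc]
        congr 1
        rw [ENNReal.inv_rpow, ← ENNReal.rpow_neg, ← ENNReal.rpow_add _ _ hm0 hmt,
          ← ENNReal.rpow_neg_one]
        congr 1; ring
    _ ≤ m⁻¹ * ∫⁻ h in ball (0 : EucN N) (2 * r), ‖f (x + h) - f x‖ₑ ^ p := by
        refine mul_le_mul_right ?_ _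
        have e1 : ∫⁻ z in ball y r, ‖f z - f x‖ₑ ^ p =
            ∫⁻ z, (ball y r).indicator (fun z => ‖f z - f x‖ₑ ^ p) z :=
          (lintegral_indicator measurableSet_ball _).symm
        have e2 : ∫⁻ h in ball (0 : EucN N) (2 * r), ‖f (x + h) - f x‖ₑ ^ p =
            ∫⁻ h, (ball (0 : EucN N) (2 * r)).indicator (fun h => ‖f (x + h) - f x‖ₑ ^ p) h :=
          (lintegral_indicator measurableSet_ball _).symm
        rw [e1, e2, ← lintegral_add_left_eq_self _ x]
        refine lintegral_mono fun h => ?_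
        by_cases hb : x + h ∈ ball y r
        · have : h ∈ ball (0 : EucN N) (2 * r) := by
            rw [mem_ball_zero_iff]
            rw [mem_ball, dist_eq_norm] at hb hx
            have : h = (x + h - y) - (x - y) := by abel
            rw [this]
            exact (norm_sub_le _ _).trans_lt (by linarith)
          rw [indicator_of_mem hb, indicator_of_mem this]
        · rw [indicator_of_notMem hb]; exact zero_le

end Rellich


section Rellich2

variable {N : ℕ} {p : ℝ}

theorem rellich_test (N : ℕ) (hp : 1 < p) (R : ℝ) {δ : ℝ} (hδ : 0 < δ) :
    ∃ (s : Finset (EucN N)) (r : ℝ) (C : ℝ≥0∞), 0 < r ∧ C ≠ ⊤ ∧ ∀ f : EucN N → ℝ,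
      ContDiff ℝ (⊤ : ℕ∞) f →
      ∫⁻ x in closedBall (0 : EucN N) R, ‖f x‖ₑ ^ p ≤
        ENNReal.ofReal δ * (∫⁻ x, ‖gradient f x‖ₑ ^ p) +
        C * ∑ y ∈ s, ‖∫ z in ball y r, f z‖ₑ ^ p := by
  have hp0 : 0 < p := by linarith
  obtain ⟨r, hr, hrδ⟩ : ∃ r : ℝ, 0 < r ∧ 2 ^ (p - 1) * (2 ^ N * (2 * r) ^ p) < δ := by
    have hc : Continuous (fun r : ℝ => (2 : ℝ) ^ (p - 1) * (2 ^ N * (2 * r) ^ p)) := by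
      fun_prop (disch := simp [hp0.le])
    have ht : Tendsto (fun r : ℝ => (2 : ℝ) ^ (p - 1) * (2 ^ N * (2 * r) ^ p)) (𝓝[>] 0) (𝓝 0) := by
      have := hc.tendsto 0
      simp only [mul_zero, Real.zero_rpow hp0.ne'] at this
      exact this.mono_left nhdsWithin_le_nhds
    obtain ⟨r, h1, h2⟩ := ((ht.eventually_lt_const hδ).and self_mem_nhdsWithin).exists
    exact ⟨r, h2, h1⟩
  set m := volume (ball (0 : EucN N) r) with hm
  have hm0 : m ≠ 0 := (measure_ball_pos _ _ hr).ne'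
  have hmt : m ≠ ⊤ := measure_ball_lt_top.ne
  obtain ⟨s, -, hs⟩ := (isCompact_closedBall (0 : EucN N) R).elim_nhds_subcover
    (fun y => ball y r) (fun y _ => ball_mem_nhds y hr)
  set V := volume (closedBall (0 : EucN N) R) with hV
  have hVt : V ≠ ⊤ := measure_closedBall_lt_top.ne
  refine ⟨s, r, 2 ^ (p - 1) * (m⁻¹ ^ p * V), hr, ?_, fun f hf => ?_⟩
  · refine ENNReal.mul_ne_top (ENNReal.rpow_ne_top_of_nonneg (by linarith) (by simp)) ?_
    exact ENNReal.mul_ne_top (ENNReal.rpow_ne_top_of_nonneg hp0.le (by simp [hm0])) hVt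
  have hpt : ∀ x ∈ closedBall (0 : EucN N) R, ‖f x‖ₑ ^ p ≤ 2 ^ (p - 1) * (m⁻¹ *
        (∫⁻ h in ball (0 : EucN N) (2 * r), ‖f (x + h) - f x‖ₑ ^ p) +
      ∑ y ∈ s, (m⁻¹ * ‖∫ z in ball y r, f z‖ₑ) ^ p) := by
    intro x hx
    obtain ⟨y, hy, hxy⟩ := mem_iUnion₂.1 (hs hx)
    refine (pt_est hp hf.continuous hr hxy).trans ?_
    gcongr
    exact Finset.single_le_sum (f := fun y => (m⁻¹ * ‖∫ z in ball y r, f z‖ₑ) ^ p)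
      (fun _ _ => zero_le) hy
  have hmeas : Measurable (fun x => ∫⁻ h in ball (0 : EucN N) (2 * r), ‖f (x + h) - f x‖ₑ ^ p) := by
    refine Measurable.lintegral_prod_right' (f := fun z : EucN N × EucN N =>
          ‖f (z.1 + z.2) - f z.1‖ₑ ^ p) ?_
    have hc := hf.continuous
    have : Continuous (fun z : EucN N × EucN N => f (z.1 + z.2) - f z.1) := by fun_prop
    exact this.measurable.enorm.pow_const p
  have hvol : volume (ball (0 : EucN N) (2 * r)) = 2 ^ N * m := by
    rw [hm, Measure.addHaar_ball_of_pos _ _ (by positivity), Measure.addHaar_ball_of_pos _ _ hr,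
      finrank_euclideanSpace_fin, mul_pow, ENNReal.ofReal_mul (by positivity), mul_assoc]
    congr 1
    rw [ENNReal.ofReal_pow (by norm_num)]; simp
  calc ∫⁻ x in closedBall (0 : EucN N) R, ‖f x‖ₑ ^ p
      ≤ ∫⁻ x in closedBall (0 : EucN N) R, 2 ^ (p - 1) * (m⁻¹ *
        (∫⁻ h in ball (0 : EucN N) (2 * r), ‖f (x + h) - f x‖ₑ ^ p) +
      ∑ y ∈ s, (m⁻¹ * ‖∫ z in ball y r, f z‖ₑ) ^ p) :=
        setLIntegral_mono' measurableSet_closedBall hpt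
    _ = 2 ^ (p - 1) * (m⁻¹ * (∫⁻ x in closedBall (0 : EucN N) R,
        (∫⁻ h in ball (0 : EucN N) (2 * r), ‖f (x + h) - f x‖ₑ ^ p)) +
        (∑ y ∈ s, (m⁻¹ * ‖∫ z in ball y r, f z‖ₑ) ^ p) * V) := by
        rw [lintegral_const_mul _ ((hmeas.const_mul _).add_const _),
          lintegral_add_right _ measurable_const, lintegral_const_mul _ hmeas, setLIntegral_const]
    _ ≤ 2 ^ (p - 1) * (m⁻¹ * (2 ^ N * m * ENNReal.ofReal (2 * r) ^ p *
        ∫⁻ x, ‖gradient f x‖ₑ ^ p) +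
        (∑ y ∈ s, (m⁻¹ * ‖∫ z in ball y r, f z‖ₑ) ^ p) * V) := by
        gcongr
        rw [← hvol]
        exact (setLIntegral_le_lintegral _ _).trans (avg_est hp hf r)
    _ = ENNReal.ofReal (2 ^ (p - 1) * (2 ^ N * (2 * r) ^ p)) * (∫⁻ x, ‖gradient f x‖ₑ ^ p) +
        2 ^ (p - 1) * (m⁻¹ ^ p * V) * ∑ y ∈ s, ‖∫ z in ball y r, f z‖ₑ ^ p := by
        rw [mul_add]
        congr 1
        · have e0 : ENNReal.ofReal (2 ^ (p - 1) * (2 ^ N * (2 * r) ^ p)) =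
              2 ^ (p - 1) * (2 ^ N * ENNReal.ofReal (2 * r) ^ p) := by
            rw [ENNReal.ofReal_mul (p := (2 : ℝ) ^ (p - 1)) (by positivity),
              ENNReal.ofReal_mul (p := (2 : ℝ) ^ N) (by positivity),
              ← ENNReal.ofReal_rpow_of_pos (x := 2 * r) (by positivity),
              ← ENNReal.ofReal_rpow_of_pos (x := 2) (by norm_num),
              ENNReal.ofReal_pow (by norm_num)]
            simp only [ENNReal.ofReal_ofNat]
          have e : m⁻¹ * (2 ^ N * m * ENNReal.ofReal (2 * r) ^ p * ∫⁻ x, ‖gradient f x‖ₑ ^ p) =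
            (m⁻¹ * m) * (2 ^ N * ENNReal.ofReal (2 * r) ^ p * ∫⁻ x, ‖gradient f x‖ₑ ^ p) := by ring
          rw [e, ENNReal.inv_mul_cancel hm0 hmt, e0]
          ring
        · simp only [ENNReal.mul_rpow_of_nonneg _ _ hp0.le]
          rw [← Finset.mul_sum]; ring
    _ ≤ _ := by
        gcongr

theorem Lp_lintegral {α : Type*} [MeasurableSpace α] {μ : Measure α}
    {E : Type*} [NormedAddCommGroup E] [InnerProductSpace ℝ E] (hp : 1 < p)
    (f : Lp E (ENNReal.ofReal p) μ) : ∫⁻ x, ‖f x‖ₑ ^ p ∂μ = ENNReal.ofReal (‖f‖ ^ p) := by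
  rw [Lp_norm_rpow hp, ofReal_integral_eq_lintegral_ofReal (Lp_integrable hp f)
    (ae_of_all _ fun x => by simp only [Pi.zero_apply]; positivity)]
  refine lintegral_congr fun x => ?_
  rw [← ofReal_norm, ENNReal.ofReal_rpow_of_nonneg (norm_nonneg _) (by linarith)]

theorem pairD_indicator [Fact (1 ≤ ENNReal.ofReal p)] {B : Set (EucN N)} (hB : MeasurableSet B)
    (hBt : volume B ≠ ⊤) (g : Lp ℝ (ENNReal.ofReal p) (volume : Measure (EucN N))) :
    pairD p (indicatorConstLp (ENNReal.ofReal p) hB hBt (1 : ℝ)) g = ∫ z in B, g z := by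
  rw [pairD, ← integral_indicator hB]
  refine integral_congr_ae ?_
  filter_upwards [indicatorConstLp_coeFn (p := ENNReal.ofReal p) (hs := hB) (hμs := hBt)
    (c := (1 : ℝ))] with x hx
  rw [hx]
  by_cases h : x ∈ B <;> simp [h]

theorem rellich (N : ℕ) [Fact (1 ≤ ENNReal.ofReal p)] (hp : 1 < p) (R : ℝ) {δ : ℝ} (hδ : 0 < δ) :
    ∃ (s : Finset (EucN N)) (F : EucN N → Lp ℝ (ENNReal.ofReal p) (volume : Measure (EucN N)))
      (C : ℝ), 0 ≤ C ∧ ∀ (Ω : Set (EucN N)), ∀ w ∈ WW N p Ω,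
      ∫ x in closedBall (0 : EucN N) R, ‖w.1 x‖ ^ p ≤
        δ * ‖w.2‖ ^ p + C * ∑ y ∈ s, |pairD p (F y) w.1| ^ p := by
  have hp0 : 0 < p := by linarith
  obtain ⟨s, r, C, hr, hC, H⟩ := rellich_test N hp R hδ
  set F : EucN N → Lp ℝ (ENNReal.ofReal p) (volume : Measure (EucN N)) := fun y =>
    indicatorConstLp (ENNReal.ofReal p) (measurableSet_ball (x := y) (ε := r))
      measure_ball_lt_top.ne (1 : ℝ) with hF
  refine ⟨s, F, C.toReal, ENNReal.toReal_nonneg, fun Ω w hw => ?_⟩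
  obtain ⟨T, hT, -⟩ := exists_mulOp (μ := (volume : Measure (EucN N))) (q := ENNReal.ofReal p)
    (A := (closedBall (0 : EucN N) R).indicator fun _ => ContinuousLinearMap.id ℝ ℝ)
    (aestronglyMeasurable_const.indicator measurableSet_closedBall) zero_le_one (fun x => by
      refine (norm_indicator_le_norm_self _ _).trans ?_
      exact ContinuousLinearMap.norm_id_le)
  have hTn : ∀ f : Lp ℝ (ENNReal.ofReal p) (volume : Measure (EucN N)),
      ∫ x in closedBall (0 : EucN N) R, ‖f x‖ ^ p = ‖T f‖ ^ p := by
    intro f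
    rw [Lp_norm_rpow hp, ← integral_indicator measurableSet_closedBall]
    refine integral_congr_ae ?_
    filter_upwards [hT f] with x hx
    rw [hx]
    by_cases h : x ∈ closedBall (0 : EucN N) R
    · simp [indicator_of_mem h]
    · simp [indicator_of_notMem h, Real.zero_rpow hp0.ne']
  have hclosed : IsClosed {w : SobPair N (ENNReal.ofReal p) | ‖T w.1‖ ^ p ≤
      δ * ‖w.2‖ ^ p + C.toReal * ∑ y ∈ s, |pairL hp (F y) w.1| ^ p} := by
    refine isClosed_le ?_ ?_ <;> fun_prop (disch := simp [hp0.le])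
  have hsub : closure {w | IsTestPair (ENNReal.ofReal p) Ω w} ⊆
      {w : SobPair N (ENNReal.ofReal p) | ‖T w.1‖ ^ p ≤
      δ * ‖w.2‖ ^ p + C.toReal * ∑ y ∈ s, |pairL hp (F y) w.1| ^ p} := by
    refine closure_minimal ?_ hclosed
    rintro w ⟨f, hf, hf1, hf2⟩
    have h := H f hf.1
    have e1 : ∫⁻ x in closedBall (0 : EucN N) R, ‖f x‖ₑ ^ p = ENNReal.ofReal (‖T w.1‖ ^ p) := by
      rw [← Lp_lintegral hp, ← lintegral_indicator measurableSet_closedBall]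
      refine lintegral_congr_ae ?_
      filter_upwards [hT w.1, hf1] with x hx hx1
      rw [hx]
      by_cases h : x ∈ closedBall (0 : EucN N) R
      · simp [indicator_of_mem h, hx1]
      · simp [indicator_of_notMem h, hp0]
    have e2 : ∫⁻ x, ‖gradient f x‖ₑ ^ p = ENNReal.ofReal (‖w.2‖ ^ p) := by
      rw [← Lp_lintegral hp]
      refine lintegral_congr_ae ?_
      filter_upwards [hf2] with x hx
      rw [hx]
    have e3 : ∀ y, ‖∫ z in ball y r, f z‖ₑ ^ p = ENNReal.ofReal (|pairL hp (F y) w.1| ^ p) := by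
      intro y
      rw [pairL_apply, hF, pairD_indicator, ← ENNReal.ofReal_rpow_of_nonneg (abs_nonneg _) hp0.le,
        ← Real.norm_eq_abs, ofReal_norm]
      congr 2
      refine integral_congr_ae (ae_restrict_of_ae ?_)
      filter_upwards [hf1] with x hx using hx.symm
    simp only [e1, e2, e3] at h
    rw [← ENNReal.ofReal_toReal hC, ← ENNReal.ofReal_sum_of_nonneg (fun _ _ => by positivity),
      ← ENNReal.ofReal_mul hδ.le, ← ENNReal.ofReal_mul ENNReal.toReal_nonneg,
      ← ENNReal.ofReal_add (by positivity) (mul_nonneg ENNReal.toReal_nonneg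
        (Finset.sum_nonneg fun _ _ => by positivity)),
      ENNReal.ofReal_le_ofReal_iff (add_nonneg (by positivity) (mul_nonneg ENNReal.toReal_nonneg
        (Finset.sum_nonneg fun _ _ => by positivity)))] at h
    exact h
  rw [hTn]
  exact hsub hw

end Rellich2


section Compactness

variable {N : ℕ} {p : ℝ}

theorem norm_sub_rpow_le {E : Type*} [SeminormedAddCommGroup E] (hp : 1 < p) (a b : E) :
    ‖a - b‖ ^ p ≤ 2 ^ p * (‖a‖ ^ p + ‖b‖ ^ p) := by
  have hp0 : 0 < p := by linarith
  have ha : 0 ≤ ‖a‖ ^ p := by positivity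
  have hb : 0 ≤ ‖b‖ ^ p := by positivity
  have h2 : (0 : ℝ) ≤ 2 ^ p := by positivity
  have h := norm_sub_le a b
  rcases le_total ‖a‖ ‖b‖ with h1 | h1
  · calc ‖a - b‖ ^ p ≤ (2 * ‖b‖) ^ p := Real.rpow_le_rpow (norm_nonneg _) (by linarith) hp0.le
      _ = 2 ^ p * ‖b‖ ^ p := Real.mul_rpow (by norm_num) (norm_nonneg _)
      _ ≤ _ := by nlinarith
  · calc ‖a - b‖ ^ p ≤ (2 * ‖a‖) ^ p := Real.rpow_le_rpow (norm_nonneg _) (by linarith) hp0.le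
      _ = 2 ^ p * ‖a‖ ^ p := Real.mul_rpow (by norm_num) (norm_nonneg _)
      _ ≤ _ := by nlinarith

theorem ultra_limit {q : ℕ → ℝ} {B : ℝ} (hq : ∀ n, |q n| ≤ B) (U : Ultrafilter ℕ) :
    ∃ L, Tendsto q U (𝓝 L) := by
  have h : (U.map q : Filter ℝ) ≤ 𝓟 (Icc (-B) B) := by
    rw [le_principal_iff]
    exact Filter.mem_map.2 (Filter.univ_mem' fun n => abs_le.1 (hq n))
  obtain ⟨L, -, hL⟩ := isCompact_Icc.ultrafilter_le_nhds (U.map q) h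
  exact ⟨L, hL⟩

theorem compactness [Fact (1 ≤ ENNReal.ofReal p)] (hp : 1 < p) {Ω : Set (EucN N)}
    {v : ℕ → SobPair N (ENNReal.ofReal p)} (hv : ∀ n, v n ∈ WW N p Ω) (hJ : ∀ n, JJ p (v n) ≤ 1)
    (ht : ∀ ε > 0, ∃ R : ℝ, ∀ᶠ n in atTop, ∫ x in {x | R ≤ ‖x‖}, ‖(v n).1 x‖ ^ p ≤ ε)
    (U : Ultrafilter ℕ) (hU : (U : Filter ℕ) ≤ atTop) :
    ∃ u, Tendsto (fun n => (v n).1) U (𝓝 u) := by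
  have hp0 : 0 < p := by linarith
  have h2p : (0 : ℝ) < 2 ^ p := by positivity
  have hcau : Cauchy (Filter.map (fun n => (v n).1) (U : Filter ℕ)) := by
    rw [Metric.cauchy_iff]
    refine ⟨inferInstance, fun ε hε => ?_⟩
    have hεp : 0 < ε ^ p := by positivity
    obtain ⟨R, hR⟩ := ht (ε ^ p / (8 * 2 ^ p)) (by positivity)
    obtain ⟨s, F, C, hC, H⟩ := rellich N hp R (show 0 < ε ^ p / (8 * 2 ^ p) by positivity)
    have hlim : ∀ y, ∃ L, Tendsto (fun n => pairD p (F y) (v n).1) U (𝓝 L) := by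
      intro y
      obtain ⟨B, hB, hb⟩ := pairD_bound hp (F y)
      refine ultra_limit (B := B) (fun n => (hb _).trans ?_) U
      have := JJ_fst_le_one hp (hJ n)
      nlinarith
    choose L hL using hlim
    -- smallness of the finite sum
    have hsum : ∃ τ : ℝ, 0 < τ ∧ C * ∑ _y ∈ s, (2 * τ) ^ p < ε ^ p / 4 := by
      have hc : Continuous (fun τ : ℝ => C * ∑ _y ∈ s, (2 * τ) ^ p) := by
        fun_prop (disch := simp [hp0.le])
      have ht : Tendsto (fun τ : ℝ => C * ∑ _y ∈ s, (2 * τ) ^ p) (𝓝[>] 0) (𝓝 0) := by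
        have := hc.tendsto 0
        simp only [mul_zero, Real.zero_rpow hp0.ne', Finset.sum_const_zero] at this
        exact this.mono_left nhdsWithin_le_nhds
      obtain ⟨τ, h1, h2⟩ := ((ht.eventually_lt_const (show (0:ℝ) < ε ^ p / 4 by positivity)).and self_mem_nhdsWithin).exists
      exact ⟨τ, h2, h1⟩
    obtain ⟨τ, hτ, hτs⟩ := hsum
    have hev : ∀ᶠ n in (U : Filter ℕ), ∀ y ∈ s, |pairD p (F y) (v n).1 - L y| < τ := by
      rw [Filter.eventually_all_finset]
      intro y _
      have := Metric.tendsto_nhds.1 (hL y) τ hτ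
      simpa [Real.dist_eq] using this
    have hevR := hU hR
    refine ⟨(fun n => (v n).1) '' {n | (∀ y ∈ s, |pairD p (F y) (v n).1 - L y| < τ) ∧
      ∫ x in {x | R ≤ ‖x‖}, ‖(v n).1 x‖ ^ p ≤ ε ^ p / (8 * 2 ^ p)},
      image_mem_map (hev.and hevR), ?_⟩
    rintro _ ⟨n, ⟨hn1, hn2⟩, rfl⟩ _ ⟨m, ⟨hm1, hm2⟩, rfl⟩
    simp only
    rw [dist_eq_norm]
    have hD := (WW N p Ω).sub_mem (hv n) (hv m)
    have hr := H Ω _ hD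
    simp only [Prod.fst_sub, Prod.snd_sub] at hr
    have h1 : ‖(v n).2 - (v m).2‖ ^ p ≤ 2 ^ p * 2 := by
      refine (norm_sub_rpow_le hp _ _).trans ?_
      have a1 : ‖(v n).2‖ ^ p ≤ 1 := by
        have := hJ n; unfold JJ at this
        have : 0 ≤ ‖(v n).1‖ ^ p := by positivity
        linarith
      have a2 : ‖(v m).2‖ ^ p ≤ 1 := by
        have := hJ m; unfold JJ at this
        have : 0 ≤ ‖(v m).1‖ ^ p := by positivity
        linarith
      nlinarith
    have h2 : C * ∑ y ∈ s, |pairD p (F y) ((v n).1 - (v m).1)| ^ p ≤ C * ∑ _y ∈ s, (2 * τ) ^ p := by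
      refine mul_le_mul_of_nonneg_left (Finset.sum_le_sum fun y hy => ?_) hC
      refine Real.rpow_le_rpow (abs_nonneg _) ?_ hp0.le
      rw [pairD_sub hp]
      have b1 := abs_lt.1 (hn1 y hy)
      have b2 := abs_lt.1 (hm1 y hy)
      rw [abs_le]
      constructor <;> linarith [b1.1, b1.2, b2.1, b2.2]
    have hms : MeasurableSet {x : EucN N | R ≤ ‖x‖} :=
      measurableSet_le measurable_const measurable_norm
    have h3 : ∫ x in {x | R ≤ ‖x‖}, ‖((v n).1 - (v m).1) x‖ ^ p ≤ 2 ^ p * (2 * (ε ^ p / (8 * 2 ^ p))) := by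
      calc ∫ x in {x | R ≤ ‖x‖}, ‖((v n).1 - (v m).1) x‖ ^ p
          ≤ ∫ x in {x | R ≤ ‖x‖}, 2 ^ p * (‖(v n).1 x‖ ^ p + ‖(v m).1 x‖ ^ p) := by
            refine integral_mono_ae (Lp_integrable hp _).integrableOn
              (((Lp_integrable hp _).add (Lp_integrable hp _)).const_mul _).integrableOn ?_
            refine ae_restrict_of_ae ?_
            filter_upwards [Lp.coeFn_sub (v n).1 (v m).1] with x hx
            rw [hx, Pi.sub_apply]
            exact norm_sub_rpow_le hp _ _
        _ = 2 ^ p * (∫ x in {x | R ≤ ‖x‖}, ‖(v n).1 x‖ ^ p) +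
            2 ^ p * ∫ x in {x | R ≤ ‖x‖}, ‖(v m).1 x‖ ^ p := by
            rw [integral_const_mul, integral_add (Lp_integrable hp _).integrableOn
              (Lp_integrable hp _).integrableOn, mul_add]
        _ ≤ _ := by nlinarith
    have h4 : ‖(v n).1 - (v m).1‖ ^ p ≤
        (∫ x in closedBall (0 : EucN N) R, ‖((v n).1 - (v m).1) x‖ ^ p) +
        ∫ x in {x | R ≤ ‖x‖}, ‖((v n).1 - (v m).1) x‖ ^ p := by
      rw [Lp_norm_rpow hp, ← integral_add_compl measurableSet_closedBall (Lp_integrable hp _)]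
      refine add_le_add le_rfl ?_
      refine setIntegral_mono_set (Lp_integrable hp ((v n).1 - (v m).1)).integrableOn
        (ae_of_all _ fun x => ?_)
        (Eventually.of_forall fun x hx => ?_)
      · exact Real.rpow_nonneg (norm_nonneg _) _
      have : x ∈ (closedBall (0 : EucN N) R)ᶜ := hx
      have : R < ‖x‖ := by simpa using this
      exact this.le
    have e1 : 2 ^ p * (2 * (ε ^ p / (8 * 2 ^ p))) = ε ^ p / 4 := by field_simp; norm_num
    have e2 : ε ^ p / (8 * 2 ^ p) * (2 ^ p * 2) = ε ^ p / 4 := by field_simp; norm_num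
    have h5 : ε ^ p / (8 * 2 ^ p) * ‖(v n).2 - (v m).2‖ ^ p ≤ ε ^ p / 4 := by
      rw [← e2]; gcongr
    have h6 : ‖(v n).1 - (v m).1‖ ^ p < ε ^ p := by linarith
    exact lt_of_not_ge fun hge => absurd (Real.rpow_le_rpow hε.le hge hp0.le) (by linarith)
  obtain ⟨u, hu⟩ := CompleteSpace.complete hcau
  exact ⟨u, hu⟩

end Compactness


section MinMax

variable {N : ℕ} {p : ℝ} [Fact (1 ≤ ENNReal.ofReal p)]

theorem MM_pos_of_unit (hp : 1 < p) {W : Submodule ℝ (SobPair N (ENNReal.ofReal p))}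
    {w : SobPair N (ENNReal.ofReal p)} (hw : w ∈ W) (h1 : ‖w.1‖ = 1) :
    0 < MM W w.1 ∧ (MM W w.1 ^ p)⁻¹ ≤ JJ p w := by
  have hp0 : 0 < p := by linarith
  have h := le_MM_mul hp w.1 hw
  rw [pairD_self hp, h1, Real.one_rpow] at h
  have hM := MM_nonneg (W := W) hp w.1
  have hJ := JJ_nonneg w
  have hpos : 0 < MM W w.1 := by
    rcases hM.eq_or_lt with h0 | h0
    · rw [← h0] at h; simp at h; linarith
    · exact h0
  refine ⟨hpos, ?_⟩
  have h2 := Real.rpow_le_rpow zero_le_one h hp0.le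
  rw [Real.one_rpow, Real.mul_rpow hM (by positivity), ← Real.rpow_mul hJ,
    one_div_mul_cancel hp0.ne', Real.rpow_one] at h2
  have h3 : 0 < MM W w.1 ^ p := by positivity
  rw [inv_le_iff_one_le_mul₀' h3]
  exact h2

theorem exists_maxMap (hp : 1 < p) {W : Submodule ℝ (SobPair N (ENNReal.ofReal p))}
    (hW : IsClosed (W : Set (SobPair N (ENNReal.ofReal p)))) :
    ∃ V : SobPair N (ENNReal.ofReal p) → SobPair N (ENNReal.ofReal p),
      (∀ w ∈ W, ‖w.1‖ = 1 → IsMaxer W w.1 (V w)) ∧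
      ContinuousOn V {w | w ∈ W ∧ ‖w.1‖ = 1} ∧
      ∀ w ∈ W, ‖w.1‖ = 1 → V (-w) = - V w := by
  classical
  have hex : ∀ w : SobPair N (ENNReal.ofReal p), ∃ v, (w ∈ W → ‖w.1‖ = 1 → IsMaxer W w.1 v) := by
    intro w
    by_cases h : w ∈ W ∧ ‖w.1‖ = 1
    · obtain ⟨v, hv⟩ := exists_maxer hp hW w.1 (MM_pos_of_unit hp h.1 h.2).1
      exact ⟨v, fun _ _ => hv⟩
    · exact ⟨0, fun h1 h2 => absurd ⟨h1, h2⟩ h⟩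
  choose V hV using hex
  refine ⟨V, hV, ?_, ?_⟩
  · rintro w ⟨hw, h1⟩
    refine maxer_tendsto (W := W) (u := fun w : SobPair N (ENNReal.ofReal p) => w.1) hp ?_
      (MM_pos_of_unit hp hw h1).1 ?_ (hV w hw h1)
    · exact (continuous_fst.tendsto w).mono_left nhdsWithin_le_nhds
    · filter_upwards [self_mem_nhdsWithin] with z hz
      exact hV z hz.1 hz.2
  · intro w hw h1
    have hn := hV (-w) (W.neg_mem hw) (by rw [Prod.fst_neg, norm_neg, h1])
    rw [Prod.fst_neg] at hn
    refine maxer_unique hp ?_ hn (hV w hw h1).neg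
    rw [MM_neg]; exact (MM_pos_of_unit hp hw h1).1

theorem int_abs_eq (hp : 1 < p) (f : Lp ℝ (ENNReal.ofReal p) (volume : Measure (EucN N))) :
    (∫ x, |f x| ^ p) = 1 ↔ ‖f‖ = 1 := by
  have hp0 : 0 < p := by linarith
  have : (∫ x, |f x| ^ p) = ‖f‖ ^ p := by
    rw [Lp_norm_rpow hp]; rfl
  rw [this]
  constructor
  · intro h
    have h2 : (‖f‖ ^ p) ^ (1 / p) = 1 := by rw [h, Real.one_rpow]
    rwa [← Real.rpow_mul (norm_nonneg _), mul_one_div_cancel hp0.ne', Real.rpow_one] at h2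
  · intro h; rw [h, Real.one_rpow]

theorem SobClass_image (hp : 1 < p) {Ω : Set (EucN N)} {ℓ : ℕ}
    {K : Set (SobPair N (ENNReal.ofReal p))} (hK : K ∈ SobClass N p hp.le Ω ℓ)
    {T : SobPair N (ENNReal.ofReal p) → SobPair N (ENNReal.ofReal p)}
    (hTc : ContinuousOn T K) (hTW : ∀ w ∈ K, T w ∈ W10 N p hp.le Ω)
    (hT1 : ∀ w ∈ K, ‖(T w).1‖ = 1) (hTn : ∀ w ∈ K, T (-w) = - T w) :
    T '' K ∈ SobClass N p hp.le Ω ℓ := by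
  obtain ⟨h1, h2, h3, h4, h5⟩ := hK
  refine ⟨?_, ?_, ?_, h4.image_of_continuousOn hTc, ?_⟩
  · rintro _ ⟨w, hw, rfl⟩; exact hTW w hw
  · rintro _ ⟨w, hw, rfl⟩; exact (int_abs_eq hp _).2 (hT1 w hw)
  · rintro _ ⟨w, hw, rfl⟩; exact ⟨-w, h3 w hw, hTn w hw⟩
  · rintro j ⟨f, hf, hf1, hfn⟩
    refine h5 j ⟨fun w => f (T w), hf.comp hTc (mapsTo_image T K), ?_, ?_⟩
    · intro w hw; exact hf1 _ ⟨w, hw, rfl⟩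
    · intro w hw; beta_reduce; rw [hTn w hw]; exact hfn _ ⟨w, hw, rfl⟩

theorem SobClass_nonempty (hp : 1 < p) {Ω : Set (EucN N)} {ℓ : ℕ} (hℓ : 1 ≤ ℓ)
    {K : Set (SobPair N (ENNReal.ofReal p))} (hK : K ∈ SobClass N p hp.le Ω ℓ) : K.Nonempty := by
  obtain ⟨h1, h2, h3, h4, h5⟩ := hK
  by_contra hne
  rw [not_nonempty_iff_eq_empty] at hne
  subst hne
  have := h5 0 ⟨fun _ => 0, by simp, by simp, by simp⟩
  omega

/-- The minmax argument: existence of almost critical points. -/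
theorem exists_near (hp : 1 < p) {Ω : Set (EucN N)} {ℓ : ℕ} (hℓ : 1 ≤ ℓ)
    (hfin : lambdaLS N p hp.le Ω ℓ ≠ ⊤) {e : ℝ} (he : 0 < e) :
    ∃ w v : SobPair N (ENNReal.ofReal p), w ∈ WW N p Ω ∧ ‖w.1‖ = 1 ∧
      IsMaxer (WW N p Ω) w.1 v ∧
      JJ p w ≤ (lambdaLS N p hp.le Ω ℓ).toReal + 1 + e ∧
      (lambdaLS N p hp.le Ω ℓ).toReal + 1 - e ≤ (MM (WW N p Ω) w.1 ^ p)⁻¹ := by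
  have hp0 : 0 < p := by linarith
  set c := (lambdaLS N p hp.le Ω ℓ).toReal with hc
  have hc0 : 0 ≤ c := ENNReal.toReal_nonneg
  have hofc : ENNReal.ofReal c = lambdaLS N p hp.le Ω ℓ := ENNReal.ofReal_toReal hfin
  obtain ⟨V, hV1, hV2, hV3⟩ := exists_maxMap hp (WW_closed (N := N) (p := p) Ω)
  -- a nearly optimal set
  have hlt : lambdaLS N p hp.le Ω ℓ < ENNReal.ofReal (c + e) := by
    rw [← hofc]; exact (ENNReal.ofReal_lt_ofReal_iff (by linarith)).2 (by linarith)
  unfold lambdaLS at hlt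
  simp only [iInf_lt_iff] at hlt
  obtain ⟨K, hK, hKlt⟩ := hlt
  have hKW : ∀ w ∈ K, w ∈ WW N p Ω := fun w hw => (mem_WW hp.le).2 (hK.1 hw)
  have hK1 : ∀ w ∈ K, ‖w.1‖ = 1 := fun w hw => (int_abs_eq hp _).1 (hK.2.1 w hw)
  have hKJ : ∀ w ∈ K, JJ p w ≤ c + 1 + e := by
    intro w hw
    have h1 : ENNReal.ofReal (∫ x, ‖w.2 x‖ ^ p) ≤ ENNReal.ofReal (c + e) :=
      (le_iSup₂ (f := fun w (_ : w ∈ K) => ENNReal.ofReal (∫ x, ‖w.2 x‖ ^ p)) w hw).trans hKlt.le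
    rw [ENNReal.ofReal_le_ofReal_iff (by linarith), ← Lp_norm_rpow hp] at h1
    unfold JJ
    rw [hK1 w hw, Real.one_rpow]; linarith
  have hVpos : ∀ w ∈ K, MM (WW N p Ω) w.1 ≤ ‖(V w).1‖ := by
    intro w hw
    have h := hV1 w (hKW w hw) (hK1 w hw)
    rw [← h.2.2]
    exact (le_abs_self _).trans (pairD_le_of_norm_one hp _ _ (hK1 w hw))
  have hMpos : ∀ w ∈ K, 0 < MM (WW N p Ω) w.1 := fun w hw =>
    (MM_pos_of_unit hp (hKW w hw) (hK1 w hw)).1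
  have hVp : ∀ w ∈ K, 0 < ‖(V w).1‖ := fun w hw => (hMpos w hw).trans_le (hVpos w hw)
  set T : SobPair N (ENNReal.ofReal p) → SobPair N (ENNReal.ofReal p) :=
    fun w => ‖(V w).1‖⁻¹ • V w with hT
  have hVc : ContinuousOn V K := hV2.mono fun w hw => ⟨hKW w hw, hK1 w hw⟩
  have hTK : T '' K ∈ SobClass N p hp.le Ω ℓ := by
    refine SobClass_image hp hK ?_ ?_ ?_ ?_
    · exact ((continuous_fst.norm.comp_continuousOn hVc).inv₀ fun w hw => (hVp w hw).ne').smul hVc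
    · intro w hw
      exact (mem_WW hp.le).1 ((WW N p Ω).smul_mem _ (hV1 w (hKW w hw) (hK1 w hw)).1)
    · intro w hw
      simp only [hT, Prod.smul_fst, norm_smul, norm_inv, norm_norm]
      exact inv_mul_cancel₀ (hVp w hw).ne'
    · intro w hw
      simp only [hT]
      rw [hV3 w (hKW w hw) (hK1 w hw), Prod.fst_neg, norm_neg, smul_neg]
  have hTJ : ∀ w ∈ K, ‖(T w).2‖ ^ p = (‖(V w).1‖ ^ p)⁻¹ - 1 := by
    intro w hw
    have hJ := (hV1 w (hKW w hw) (hK1 w hw)).JJ_eq hp (hMpos w hw)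
    unfold JJ at hJ
    have hpos : 0 < ‖(V w).1‖ ^ p := by have := hVp w hw; positivity
    simp only [hT, Prod.smul_snd, norm_smul, norm_inv, norm_norm]
    rw [Real.mul_rpow (by positivity) (norm_nonneg _), Real.inv_rpow (norm_nonneg _)]
    have : ‖(V w).2‖ ^ p = 1 - ‖(V w).1‖ ^ p := by linarith
    rw [this]; field_simp
  have hex : ∃ w ∈ K, c + 1 - e ≤ (‖(V w).1‖ ^ p)⁻¹ := by
    by_contra hcon
    push Not at hcon
    obtain ⟨w0, hw0⟩ := SobClass_nonempty hp hℓ hK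
    have hce : 0 ≤ c - e := by
      have h1 := hcon w0 hw0
      have h2 := hTJ w0 hw0
      have h3 : 0 ≤ ‖(T w0).2‖ ^ p := by positivity
      linarith
    have hle : lambdaLS N p hp.le Ω ℓ ≤ ENNReal.ofReal (c - e) := by
      refine (iInf₂_le (T '' K) hTK).trans ?_
      refine iSup₂_le ?_
      rintro _ ⟨w, hw, rfl⟩
      refine ENNReal.ofReal_le_ofReal ?_
      rw [← Lp_norm_rpow hp, hTJ w hw]
      have := hcon w hw
      linarith
    rw [← hofc, ENNReal.ofReal_le_ofReal_iff hce] at hle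
    linarith
  obtain ⟨w, hw, hwe⟩ := hex
  refine ⟨w, V w, hKW w hw, hK1 w hw, hV1 w (hKW w hw) (hK1 w hw), hKJ w hw, hwe.trans ?_⟩
  have h1 := hMpos w hw
  have h2 := hVpos w hw
  gcongr

end MinMax


section Final

variable {N : ℕ} {p : ℝ} [Fact (1 ≤ ENNReal.ofReal p)]

set_option maxHeartbeats 1000000 in
theorem limit_eigen (hp : 1 < p) {Ω : Set (EucN N)} {c lam R0 : ℝ} (hc : 0 ≤ c) (hR0 : 0 < R0)
    (hl : c < lam)
    (hPo : ENNReal.ofReal lam ≤ lambda1p N p hp.le (Ω \ closure (ball (0 : EucN N) R0)))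
    {w v : ℕ → SobPair N (ENNReal.ofReal p)} {e : ℕ → ℝ} (he : Tendsto e atTop (𝓝 0))
    (hw : ∀ n, w n ∈ WW N p Ω) (hw1 : ∀ n, ‖(w n).1‖ = 1)
    (hv : ∀ n, IsMaxer (WW N p Ω) (w n).1 (v n))
    (hJ : ∀ n, JJ p (w n) ≤ c + 1 + e n)
    (hM : ∀ n, c + 1 - e n ≤ (MM (WW N p Ω) (w n).1 ^ p)⁻¹) :
    ∃ z ∈ WW N p Ω, z ≠ 0 ∧ ∀ φ ∈ WW N p Ω, pairD p z.2 φ.2 = c * pairD p z.1 φ.1 := by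
  have hp0 : 0 < p := by linarith
  have hip : 0 < 1 / p := by positivity
  set M : ℕ → ℝ := fun n => MM (WW N p Ω) (w n).1 with hMdef
  have hMpos : ∀ n, 0 < M n := fun n => (MM_pos_of_unit hp (hw n) (hw1 n)).1
  have hMJ : ∀ n, (M n ^ p)⁻¹ ≤ JJ p (w n) := fun n => (MM_pos_of_unit hp (hw n) (hw1 n)).2
  have hup : Tendsto (fun n => c + 1 + e n) atTop (𝓝 (c + 1)) := by
    simpa using he.const_add (c + 1)
  have hdn : Tendsto (fun n => c + 1 - e n) atTop (𝓝 (c + 1)) := by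
    simpa using he.const_sub (c + 1)
  have hMt : Tendsto (fun n => (M n ^ p)⁻¹) atTop (𝓝 (c + 1)) :=
    tendsto_of_tendsto_of_tendsto_of_le_of_le hdn hup hM fun n => (hMJ n).trans (hJ n)
  have hJt : Tendsto (fun n => JJ p (w n)) atTop (𝓝 (c + 1)) :=
    tendsto_of_tendsto_of_tendsto_of_le_of_le hdn hup (fun n => (hM n).trans (hMJ n)) hJ
  set β : ℝ := (c + 1) ^ (1 / p) with hβ
  have hβpos : 0 < β := by positivity
  have hββ : β * β ^ (p - 1) = c + 1 := by
    have h1 : β * β ^ (p - 1) = β ^ p := by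
      rw [mul_comm, ← Real.rpow_add_one hβpos.ne']; congr 1; ring
    rw [h1, hβ, ← Real.rpow_mul (by positivity), one_div_mul_cancel hp0.ne', Real.rpow_one]
  have hβp : β ^ p = c + 1 := by
    rw [hβ, ← Real.rpow_mul (by positivity), one_div_mul_cancel hp0.ne', Real.rpow_one]
  set r : ℕ → ℝ := fun n => JJ p (w n) ^ (1 / p) with hr
  have hrt : Tendsto r atTop (𝓝 β) := hJt.rpow_const (Or.inr hip.le)
  have hMinv : Tendsto (fun n => (M n)⁻¹) atTop (𝓝 β) := by
    have h := hMt.rpow_const (p := 1 / p) (Or.inr hip.le)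
    refine h.congr fun n => ?_
    rw [← Real.inv_rpow (hMpos n).le, ← Real.rpow_mul (inv_nonneg.2 (hMpos n).le),
      mul_one_div_cancel hp0.ne', Real.rpow_one]
  have hMlim : Tendsto M atTop (𝓝 β⁻¹) := by
    simpa using hMinv.inv₀ hβpos.ne'
  have hJpos : ∀ n, 0 < JJ p (w n) := by
    intro n
    have h1 := hMpos n
    have h2 : 0 < (M n ^ p)⁻¹ := by positivity
    exact h2.trans_le (hMJ n)
  have hrpos : ∀ n, 0 < r n := fun n => Real.rpow_pos_of_pos (hJpos n) _
  have hvJ : ∀ n, JJ p (v n) ≤ 1 := fun n => (hv n).2.1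
  -- `v n` is close to the normalisation of `w n`
  have hvb : Tendsto (fun n => v n - (r n)⁻¹ • w n) atTop (𝓝 0) := by
    refine tendsto_of_JJ hp fun ε hε => ?_
    obtain ⟨δ, hδ, H⟩ := near_max (F := ℝ) (E := EucN N) (μ := (volume : Measure (EucN N))) hp hε
    have h1 : Tendsto (fun n => (1 - δ) * M n) atTop (𝓝 ((1 - δ) * β⁻¹)) := hMlim.const_mul _
    have h2 : Tendsto (fun n => (r n)⁻¹) atTop (𝓝 β⁻¹) := hrt.inv₀ hβpos.ne'
    have h3 : (1 - δ) * β⁻¹ < β⁻¹ := by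
      have : 0 < β⁻¹ := by positivity
      nlinarith
    filter_upwards [h1.eventually_lt h2 h3] with n hn
    refine H (WW N p Ω) (w n).1 (hMpos n) (v n) (hv n).1 _ ((WW N p Ω).smul_mem _ (hw n)) (hvJ n)
      (JJ_normalize hp (hJpos n)).le ?_ ?_
    · rw [(hv n).2.2]
      have : 0 < M n := hMpos n
      change (1 - δ) * M n ≤ M n
      nlinarith
    · rw [Prod.smul_fst, pairD_smul, pairD_self hp, hw1, Real.one_rpow, mul_one]
      exact hn.le
  have hd : Tendsto (fun n => w n - β • v n) atTop (𝓝 0) := by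
    have h1 : Tendsto (fun n => r n • (v n - (r n)⁻¹ • w n)) atTop (𝓝 0) := by
      simpa using hrt.smul hvb
    have h2 : Tendsto (fun n => (r n - β) • v n) atTop (𝓝 0) := by
      refine squeeze_zero_norm (a := fun n => |r n - β|) (fun n => ?_) ?_
      · rw [norm_smul, Real.norm_eq_abs]
        exact mul_le_of_le_one_right (abs_nonneg _) (JJ_norm_le_one hp (hvJ n))
      · have : Tendsto (fun n => r n - β) atTop (𝓝 0) := by simpa using hrt.sub_const β
        simpa using this.abs
    have h3 := h2.sub h1
    rw [sub_zero] at h3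
    refine h3.congr fun n => ?_
    rw [smul_sub, smul_smul, mul_inv_cancel₀ (hrpos n).ne', one_smul, sub_smul]
    abel
  have hd1 : Tendsto (fun n => (w n).1 - β • (v n).1) atTop (𝓝 0) :=
    (continuous_fst.tendsto _).comp hd
  have hv1 : ∀ n, ‖(v n).1‖ ≤ 1 := fun n => JJ_fst_le_one hp (hvJ n)
  -- almost Euler equation
  have hEul : ∀ κ > 0, ∀ᶠ n in atTop, ∀ φ ∈ WW N p Ω, ‖φ.1‖ ≤ 1 →
      pairD p (v n).1 φ.1 + pairD p (v n).2 φ.2 ≤ (c + 1) * pairD p (v n).1 φ.1 + κ := by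
    intro κ hκ
    obtain ⟨C, hC, H⟩ := pairD_cont (E := ℝ) (μ := (volume : Measure (EucN N))) hp
      (show 0 < κ / (4 * β * (c + 3)) by positivity)
    have t1 : ∀ᶠ n in atTop, |(M n)⁻¹ - β| < κ / 2 := by
      have := Metric.tendsto_nhds.1 hMinv (κ / 2) (by positivity)
      simpa [Real.dist_eq] using this
    have t2 : ∀ᶠ n in atTop, β * (C * ‖(w n).1 - β • (v n).1‖ ^ p) < κ / 4 := by
      have h0 : Tendsto (fun n => β * (C * ‖(w n).1 - β • (v n).1‖ ^ p)) atTop (𝓝 0) := by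
        have := ((hd1.norm.rpow_const (p := p) (Or.inr hp0.le)).const_mul C).const_mul β
        simpa [Real.zero_rpow hp0.ne'] using this
      exact h0.eventually_lt_const (by positivity)
    filter_upwards [t1, t2] with n h1 h2 φ hφ hφ1
    rw [(hv n).euler hp (hMpos n) hφ]
    have a1 : |pairD p (w n).1 φ.1| ≤ 1 := (pairD_le_of_norm_one hp _ _ (hw1 n)).trans hφ1
    have a2 : (c + 1) * pairD p (v n).1 φ.1 = β * pairD p (β • (v n).1) φ.1 := by
      rw [pairD_smul_left hβpos, ← mul_assoc, hββ]
    have a3 := H (w n).1 (β • (v n).1) φ.1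
    have a4 : ‖β • (v n).1‖ ^ p ≤ c + 1 := by
      rw [norm_smul, Real.norm_eq_abs, abs_of_pos hβpos, Real.mul_rpow hβpos.le (norm_nonneg _), hβp]
      have : ‖(v n).1‖ ^ p ≤ 1 := Real.rpow_le_one (norm_nonneg _) (hv1 n) hp0.le
      nlinarith
    have a5 : ‖φ.1‖ ^ p ≤ 1 := Real.rpow_le_one (norm_nonneg _) hφ1 hp0.le
    have a6 : ‖(w n).1‖ ^ p = 1 := by rw [hw1, Real.one_rpow]
    have a7 : κ / (4 * β * (c + 3)) * (‖(w n).1‖ ^ p + ‖β • (v n).1‖ ^ p + ‖φ.1‖ ^ p) ≤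
        κ / (4 * β * (c + 3)) * (c + 3) :=
      mul_le_mul_of_nonneg_left (by linarith) (by positivity)
    have a8 : β * (κ / (4 * β * (c + 3)) * (c + 3)) = κ / 4 := by field_simp
    have a9 : pairD p (w n).1 φ.1 - pairD p (β • (v n).1) φ.1 ≤
        κ / (4 * β * (c + 3)) * (c + 3) + C * ‖(w n).1 - β • (v n).1‖ ^ p :=
      (le_abs_self _).trans (a3.trans (by linarith))
    have a10 := mul_le_mul_of_nonneg_left a9 hβpos.le
    rw [mul_add, a8] at a10
    have a11 : ((M n)⁻¹ - β) * pairD p (w n).1 φ.1 ≤ κ / 2 := by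
      refine (le_abs_self _).trans ?_
      rw [abs_mul]
      have := abs_nonneg ((M n)⁻¹ - β)
      nlinarith
    rw [a2]
    change (M n)⁻¹ * pairD p (w n).1 φ.1 ≤ _
    nlinarith
  have htight : ∀ ε > 0, ∃ R : ℝ, ∀ᶠ n in atTop,
      ∫ x in {x | R ≤ ‖x‖}, ‖(v n).1 x‖ ^ p ≤ ε := by
    intro ε hε
    obtain ⟨R, _, κ, hκ, H⟩ := tight hp hR0 hl hPo hε
    refine ⟨R, ?_⟩
    filter_upwards [hEul κ hκ] with n hn
    exact H (v n) (hv n).1 (hvJ n) hn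
  set U : Ultrafilter ℕ := Filter.hyperfilter ℕ with hUdef
  have hU : (U : Filter ℕ) ≤ atTop := Nat.hyperfilter_le_atTop
  obtain ⟨u0, hu0⟩ := compactness hp (fun n => (hv n).1) hvJ htight U hU
  have hwt : Tendsto (fun n => (w n).1) U (𝓝 (β • u0)) := by
    have h1 := (hd1.mono_left hU).add (hu0.const_smul β)
    rw [zero_add] at h1
    refine h1.congr fun n => ?_
    abel
  have hMM : MM (WW N p Ω) (β • u0) = β⁻¹ :=
    tendsto_nhds_unique (MM_tendsto (W := WW N p Ω) hp hwt) (hMlim.mono_left hU)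
  have hMM0 : 0 < MM (WW N p Ω) (β • u0) := by rw [hMM]; positivity
  obtain ⟨z, hz⟩ := exists_maxer hp (WW_closed (N := N) (p := p) Ω) _ hMM0
  have hvz : Tendsto v U (𝓝 z) :=
    maxer_tendsto hp hwt hMM0 (Eventually.of_forall hv) hz
  have hz1 : z.1 = u0 :=
    tendsto_nhds_unique ((continuous_fst.tendsto z).comp hvz) hu0
  refine ⟨z, hz.1, ?_, fun φ hφ => ?_⟩
  · rintro rfl
    have := hz.JJ_eq hp hMM0
    rw [JJ_zero hp] at this
    norm_num at this
  · have h := hz.euler hp hMM0 hφ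
    have h' : pairD p (β • u0) φ.1 = β ^ (p - 1) * pairD p u0 φ.1 := pairD_smul_left hβpos u0 φ.1
    rw [hMM, inv_inv, h', ← mul_assoc, hββ, hz1] at h
    rw [hz1]
    linarith

theorem isEigen_of_pairD (hp : 1 < p) {Ω : Set (EucN N)} {c : ℝ}
    {z : SobPair N (ENNReal.ofReal p)} (hz : z ∈ WW N p Ω) (hz0 : z ≠ 0)
    (h : ∀ φ ∈ WW N p Ω, pairD p z.2 φ.2 = c * pairD p z.1 φ.1) :
    IsEigenvalue N p hp.le Ω c := by
  refine ⟨z, (mem_WW hp.le).1 hz, hz0, fun φ hφ => ?_⟩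
  have m1 := hφ.memLp (ENNReal.ofReal p)
  have m2 := hφ.memLp_gradient (ENNReal.ofReal p)
  have hmem : ((m1.toLp φ, m2.toLp _) : SobPair N (ENNReal.ofReal p)) ∈ WW N p Ω := by
    rw [mem_WW hp.le]
    exact subset_closure ⟨φ, hφ, m1.coeFn_toLp, m2.coeFn_toLp⟩
  have h1 := h _ hmem
  unfold pairD at h1
  have e1 : ∫ x, ‖z.2 x‖ ^ (p - 2) * ⟪z.2 x, gradient φ x⟫ =
      ∫ x, ‖z.2 x‖ ^ (p - 2) * ⟪z.2 x, (m2.toLp _) x⟫ := by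
    refine integral_congr_ae ?_
    filter_upwards [m2.coeFn_toLp] with x hx
    rw [hx]
  have e2 : ∫ x, |z.1 x| ^ (p - 2) * (z.1 x) * φ x =
      ∫ x, ‖z.1 x‖ ^ (p - 2) * ⟪z.1 x, (m1.toLp φ) x⟫ := by
    refine integral_congr_ae ?_
    filter_upwards [m1.coeFn_toLp] with x hx
    rw [hx, Real.norm_eq_abs, real_inner_eq_re_inner, mul_assoc]
    simp [mul_comm]
  rw [e1, e2]
  exact h1

theorem lambdaLS_mono (hp : 1 < p) (Ω : Set (EucN N)) {ℓ k : ℕ} (h : ℓ ≤ k) :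
    lambdaLS N p hp.le Ω ℓ ≤ lambdaLS N p hp.le Ω k := by
  refine le_iInf₂ fun K hK => ?_
  exact iInf₂_le K ⟨hK.1, hK.2.1, hK.2.2.1, hK.2.2.2.1, fun j hj => h.trans (hK.2.2.2.2 j hj)⟩

end Final

theorem main_aux (N : ℕ) (p : ℝ) (hp1 : 1 < p) (Ω : Set (EucN N))
    (k : ℕ) (hlt : lambdaLS N p hp1.le Ω k < Einfty N p hp1.le Ω) :
    ∀ ℓ : ℕ, 1 ≤ ℓ → ℓ ≤ k →
      IsEigenvalue N p hp1.le Ω ((lambdaLS N p hp1.le Ω ℓ).toReal) := by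
  intro ℓ hℓ hℓk
  have := fact_one_le_ofReal hp1.le
  have hlt2 := (lambdaLS_mono hp1 Ω hℓk).trans_lt hlt
  have hfin : lambdaLS N p hp1.le Ω ℓ ≠ ⊤ := (hlt2.trans_le le_top).ne
  unfold Einfty at hlt2
  simp only [lt_iSup_iff] at hlt2
  obtain ⟨R0, hR0, hR⟩ := hlt2
  obtain ⟨lam, hlam0, hl1, hl2⟩ := ENNReal.lt_iff_exists_real_btwn.1 hR
  have hcl : (lambdaLS N p hp1.le Ω ℓ).toReal < lam := by
    rw [← ENNReal.ofReal_toReal hfin] at hl1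
    exact (ENNReal.ofReal_lt_ofReal_iff_of_nonneg ENNReal.toReal_nonneg).1 hl1
  have hex := fun n : ℕ => exists_near hp1 hℓ hfin (show (0 : ℝ) < 1 / ((n : ℝ) + 1) by positivity)
  choose w v h1 h2 h3 h4 h5 using hex
  obtain ⟨z, hz, hz0, hzE⟩ := limit_eigen hp1 ENNReal.toReal_nonneg hR0 hcl hl2.le
    tendsto_one_div_add_atTop_nhds_zero_nat h1 h2 h3 h4 h5
  exact isEigen_of_pairD hp1 hz hz0 hzE


theorem statement0 (N : ℕ) (p : ℝ) (hp1 : 1 < p) (Ω : Set (EucN N)) (hΩ : IsOpen Ω)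
    (k : ℕ) (hk : k ≠ 0) (hlt : lambdaLS N p hp1.le Ω k < Einfty N p hp1.le Ω) :
    ∀ ℓ : ℕ, 1 ≤ ℓ → ℓ ≤ k →
      IsEigenvalue N p hp1.le Ω ((lambdaLS N p hp1.le Ω ℓ).toReal) := by
  exact main_aux N p hp1 Ω k hlt

end
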